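/- arXiv:1412.1793 — 5 statements merged into one kernel-verified Lean document; each statement's English description precedes it below -/
import Mathlib

section
/- There exists a function f : ℕ × ℕ → ℕ such that for every integer ℓ ≥ 0, every integer d, and every graph G of distance VC-dimension at most d, the B_ℓ-hypergraph of G satisfies τ_ℓ ≤ f(ν_ℓ, d); in other words, G can be covered by f(ν_ℓ, d) balls of radius ℓ. -/
open SimpleGraph

/-- The ball of center `v` and radius `k` in a graph. -/
def gball {V : Type*} (G : SimpleGraph V) (v : V) (k : ℕ) : Set V :=
  {w | G.edist v w ≤ (k : ℕ∞)}

/-- `X` is shattered by the B-hypergraph of `G` (hyperedges: all balls of all radii). -/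
def BShattered {V : Type*} (G : SimpleGraph V) (X : Set V) : Prop :=
  ∀ Y ⊆ X, ∃ (v : V) (k : ℕ), gball G v k ∩ X = Y

/-- The distance VC-dimension of `G` is at most `d`. -/
def distVCdimLE {V : Type*} (G : SimpleGraph V) (d : ℕ) : Prop :=
  ∀ (S : Set V) (X : Set S), BShattered (G.induce S) X → X.ncard ≤ d

/-- Transversality of the `B_ℓ`-hypergraph: minimum size of a set meeting every ball of radius ℓ. -/
noncomputable def transversality {V : Type*} [Fintype V] (G : SimpleGraph V) (ℓ : ℕ) : ℕ :=
  sInf {n | ∃ T : Finset V, T.card = n ∧ ∀ v : V, ∃ t ∈ T, t ∈ gball G v ℓ}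

/-- Packing number of the `B_ℓ`-hypergraph: maximum number of pairwise disjoint balls of radius ℓ. -/
noncomputable def packingNumber {V : Type*} [Fintype V] (G : SimpleGraph V) (ℓ : ℕ) : ℕ :=
  sSup {n | ∃ C : Finset V, C.card = n ∧
    (C : Set V).Pairwise fun u w => Disjoint (gball G u ℓ) (gball G w ℓ)}


namespace EP

variable {V : Type*}

lemma adjseq_walk (G : SimpleGraph V) (w : ℕ → V) (L : ℕ) (h : ∀ s < L, G.Adj (w s) (w (s+1))) :
    ∀ s t, s ≤ t → t ≤ L → ∃ p : G.Walk (w s) (w t), p.length = t - s := by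
  intro s t hst
  induction t, hst using Nat.le_induction with
  | base => intro _; exact ⟨Walk.nil, by simp⟩
  | succ t hst ih =>
    intro ht
    obtain ⟨p, hp⟩ := ih (by omega)
    refine ⟨p.concat (h t (by omega)), ?_⟩
    rw [Walk.length_concat, hp]; omega

lemma exists_geo (G : SimpleGraph V) : ∃ g : V → V → ℕ → V, ∀ u v, G.Reachable u v →
    g u v 0 = u ∧ g u v (G.dist u v) = v ∧
    ∀ t < G.dist u v, G.Adj (g u v t) (g u v (t+1)) := by
  classical
  refine ⟨fun u v => if h : G.Reachable u v then h.exists_walk_length_eq_dist.choose.getVert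
    else fun _ => u, ?_⟩
  intro u v h
  have hs := h.exists_walk_length_eq_dist.choose_spec
  simp only [h, dif_pos]
  refine ⟨Walk.getVert_zero _, ?_, ?_⟩
  · exact Walk.getVert_of_length_le _ hs.le
  · intro t ht
    exact Walk.adj_getVert_succ _ (by rw [hs]; exact ht)

lemma arith (I : Type*) (ℓ D t : ℕ) (i j : I) (δ : I → ℕ) (hD : D ≤ 2 * ℓ) (ht : t ≤ D)
    (hi : δ i = t) (hj : δ j = D - t)
    (hfar : ∀ l, l ≠ i → l ≠ j → ∀ c ≤ D, D ≤ 2 * c + 2 → 2 * c ≤ D + 2 →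
      ℓ < δ l + ((c - t) + (t - c)))
    (k k' : I) (hkk : k ≠ k') (hmin : ∀ l, δ k ≤ δ l) (hk' : δ k' ≤ δ k + 1) :
    ((k = i ∧ k' = j ∨ k = j ∧ k' = i) ∧ ∀ l, l ≠ i → l ≠ j → ℓ < δ l) ∨
      (δ k = ℓ ∧ δ k' = ℓ + 1) := by
  have h1 := hmin i
  have h2 := hmin j
  have key : ∀ l, l ≠ i → l ≠ j → ℓ < δ l + (((D-1)/2 - t) + (t - (D-1)/2)) ∧
      ℓ < δ l + ((D/2 - t) + (t - D/2)) ∧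
      ((D / 2 + 1 ≤ D) → ℓ < δ l + ((D/2+1 - t) + (t - (D/2+1)))) ∧
      (D ≤ 2 * t + 2 → 2 * t ≤ D + 2 → ℓ < δ l) := by
    intro l hl hl'
    refine ⟨hfar l hl hl' _ (by omega) (by omega) (by omega),
      hfar l hl hl' _ (by omega) (by omega) (by omega),
      fun h => hfar l hl hl' _ h (by omega) (by omega), fun h h' => ?_⟩
    have := hfar l hl hl' t ht h h'
    omega
  by_cases ki : k = i
  · by_cases kj : k' = j
    · left
      refine ⟨Or.inl ⟨ki, kj⟩, fun l hl hl' => ?_⟩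
      subst ki kj
      exact (key l hl hl').2.2.2 (by omega) (by omega)
    · have hki : k' ≠ i := fun h => hkk (by rw [ki, h])
      obtain ⟨a, b, c, d⟩ := key k' hki kj
      subst ki
      right
      by_cases D / 2 + 1 ≤ D
      · have c := c ‹_›
        by_cases hh : D ≤ 2 * t + 2 ∧ 2 * t ≤ D + 2
        · have := d hh.1 hh.2
          omega
        · omega
      · have := d (by omega) (by omega)
        omega
  · by_cases kj : k = j
    · by_cases kj' : k' = i
      · left
        refine ⟨Or.inr ⟨kj, kj'⟩, fun l hl hl' => ?_⟩
        subst kj kj'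
        exact (key l hl hl').2.2.2 (by omega) (by omega)
      · have hki : k' ≠ j := fun h => hkk (by rw [kj, h])
        obtain ⟨a, b, c, d⟩ := key k' kj' hki
        subst kj
        right
        by_cases D / 2 + 1 ≤ D
        · have c := c ‹_›
          by_cases hh : D ≤ 2 * t + 2 ∧ 2 * t ≤ D + 2
          · have := d hh.1 hh.2
            omega
          · omega
        · have := d (by omega) (by omega)
          omega
    · exfalso
      obtain ⟨a, b, c, d⟩ := key k ki kj
      by_cases D / 2 + 1 ≤ D
      · have c := c ‹_›
        by_cases hh : D ≤ 2 * t + 2 ∧ 2 * t ≤ D + 2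
        · have := d hh.1 hh.2
          omega
        · omega
      · have := d (by omega) (by omega)
        omega

/-- the bipartite pattern graph -/
def HAdj {n : ℕ} : Option (Fin n) ⊕ Finset (Fin n) → Option (Fin n) ⊕ Finset (Fin n) → Prop
  | .inl none, .inr _ => True
  | .inl (some r), .inr b => r ∈ b
  | .inr _, .inl none => True
  | .inr b, .inl (some r) => r ∈ b
  | _, _ => False

lemma HAdj.symm {n : ℕ} {i j : Option (Fin n) ⊕ Finset (Fin n)} (h : HAdj i j) : HAdj j i := by
  rcases i with (_ | _) | _ <;> rcases j with (_ | _) | _ <;> simp_all [HAdj]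

/-- A sequence of owners starting at `inl (some r)`, ending at `inr b`, `r ∉ b`, must have a step which
is either not along `HAdj`, or is along an edge missing both end points. -/
lemma owner_walk {n : ℕ} (r : Fin n) (b : Finset (Fin n)) (hrb : r ∉ b) (L : ℕ)
    (o : ℕ → Option (Fin n) ⊕ Finset (Fin n)) (h0 : o 0 = .inl (some r)) (hL : o L = .inr b)
    (hstep : ∀ s < L, o s ≠ o (s+1) → HAdj (o s) (o (s+1))) :
    ∃ s < L, o s ≠ o (s+1) ∧ Sum.inl (some r) ≠ o s ∧ Sum.inl (some r) ≠ o (s+1) ∧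
      Sum.inr b ≠ o s ∧ Sum.inr b ≠ o (s+1) := by
  by_contra hcon
  push Not at hcon
  have : ∀ s ≤ L, o s = .inl (some r) ∨ HAdj (.inl (some r)) (o s) := by
    intro s
    induction s with
    | zero => intro _; exact Or.inl h0
    | succ s ih =>
      intro hs
      have ih := ih (by omega)
      by_cases he : o s = o (s+1)
      · rwa [← he]
      have h1 := hstep s (by omega) he
      have h2 := hcon s (by omega) he
      rcases ih with ih | ih
      · right; rwa [ih] at h1
      · left
        by_contra h3
        have h4 : Sum.inl (some r) ≠ o s := by
          intro h; rw [← h] at ih; simp [HAdj] at ih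
        have h5 : Sum.inr b ≠ o s := by
          intro h; rw [← h] at ih; exact hrb ih
        have h6 := h2 h4 (fun h => h3 h.symm) h5
        rw [← h6] at h1
        rcases hh : o s with (_ | _) | _ <;> rw [hh] at ih h1 <;> simp [HAdj] at ih h1
  rcases this L le_rfl with h | h
  · rw [hL] at h; simp at h
  · rw [hL] at h; exact hrb h

theorem core (G : SimpleGraph V) (ℓ n : ℕ) (x : Option (Fin n) ⊕ Finset (Fin n) → V)
    (g : V → V → ℕ → V) (hn : 0 < n)
    (hg : ∀ u v, G.Reachable u v → g u v 0 = u ∧ g u v (G.dist u v) = v ∧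
      ∀ t < G.dist u v, G.Adj (g u v t) (g u v (t+1)))
    (hr : ∀ i j, G.Reachable (x i) (x j))
    (hD : ∀ i j, i ≠ j → G.dist (x i) (x j) ≤ 2 * ℓ)
    (hfar : ∀ i j k, i ≠ j → k ≠ i → k ≠ j → ∀ t ≤ G.dist (x i) (x j),
      G.dist (x i) (x j) ≤ 2 * t + 2 → 2 * t ≤ G.dist (x i) (x j) + 2 →
      ℓ < G.dist (x k) (g (x i) (x j) t)) :
    ∃ (S : Set V) (X : Set S), BShattered (G.induce S) X ∧ X.ncard = n := by
  classical
  have hw : ∀ i j s t, s ≤ t → t ≤ G.dist (x i) (x j) →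
      ∃ p : G.Walk (g (x i) (x j) s) (g (x i) (x j) t), p.length = t - s := by
    intro i j
    exact adjseq_walk G _ _ (hg _ _ (hr i j)).2.2
  have hg0 : ∀ i j, g (x i) (x j) 0 = x i := fun i j => (hg _ _ (hr i j)).1
  have hgD : ∀ i j, g (x i) (x j) (G.dist (x i) (x j)) = x j := fun i j => (hg _ _ (hr i j)).2.1
  have hreach : ∀ k i j t, t ≤ G.dist (x i) (x j) → G.Reachable (x k) (g (x i) (x j) t) := by
    intro k i j t ht
    obtain ⟨p, -⟩ := hw i j 0 t (by omega) ht
    exact (hr k i).trans (by rw [hg0] at p; exact ⟨p⟩)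
  have hdl : ∀ i j t, t ≤ G.dist (x i) (x j) → G.dist (x i) (g (x i) (x j) t) = t ∧
      G.dist (x j) (g (x i) (x j) t) = G.dist (x i) (x j) - t := by
    intro i j t ht
    obtain ⟨p, hp⟩ := hw i j 0 t (by omega) ht
    obtain ⟨q, hq⟩ := hw i j t _ ht le_rfl
    have h1 := dist_le p
    have h2 := dist_le q
    rw [hp, hg0] at h1
    rw [hq, hgD, SimpleGraph.dist_comm] at h2
    have h3 := (hreach i i j t ht).dist_triangle_left (x j)
    rw [G.dist_comm (u := g (x i) (x j) t)] at h3
    omega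
  have hsub : ∀ k i j t c, t ≤ G.dist (x i) (x j) → c ≤ G.dist (x i) (x j) →
      G.dist (x k) (g (x i) (x j) c) ≤ G.dist (x k) (g (x i) (x j) t) + ((c - t) + (t - c)) := by
    intro k i j t c ht hc
    have h3 := (hreach k i j t ht).dist_triangle_left (g (x i) (x j) c)
    rcases le_total t c with h | h
    · obtain ⟨p, hp⟩ := hw i j t c h hc
      have := dist_le p
      omega
    · obtain ⟨p, hp⟩ := hw i j c t h ht
      have := dist_le p
      rw [SimpleGraph.dist_comm] at this
      omega
  let S : Set V := {w | ∃ i j t, HAdj i j ∧ t ≤ G.dist (x i) (x j) ∧ w = g (x i) (x j) t}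
  have hneq : ∀ i j : Option (Fin n) ⊕ Finset (Fin n), HAdj i j → i ≠ j := by
    rintro i j h rfl
    rcases i with (_ | _) | _ <;> simp [HAdj] at h
  have hP : ∀ w ∈ S, ∀ k k', k ≠ k' → (∀ l, G.dist (x k) w ≤ G.dist (x l) w) →
      G.dist (x k') w ≤ G.dist (x k) w + 1 →
      (HAdj k k' ∧ ∀ l, l ≠ k → l ≠ k' → ℓ < G.dist (x l) w) ∨
      (G.dist (x k) w = ℓ ∧ G.dist (x k') w = ℓ + 1) := by
    rintro w ⟨i, j, t, hij, ht, rfl⟩ k k' hkk hmin hk'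
    have := arith _ ℓ _ t i j (fun l => G.dist (x l) (g (x i) (x j) t)) (hD i j (hneq _ _ hij)) ht
      (hdl i j t ht).1 (hdl i j t ht).2 (by
        intro l hli hlj c hc h1 h2
        exact (hfar i j l (hneq _ _ hij) hli hlj c hc h1 h2).trans_le (hsub l i j t c ht hc)) k k' hkk hmin hk'
    rcases this with ⟨⟨rfl, rfl⟩ | ⟨rfl, rfl⟩, h⟩ | h
    · exact Or.inl ⟨hij, h⟩
    · exact Or.inl ⟨hij.symm, fun l h1 h2 => h l h2 h1⟩
    · exact Or.inr h
  have hSr : ∀ w ∈ S, ∀ k, G.Reachable (x k) w := by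
    rintro w ⟨i, j, t, hij, ht, rfl⟩ k
    exact hreach k i j t ht
  have hown : ∀ w : V, ∃ k, ∀ l, G.dist (x k) w ≤ G.dist (x l) w := by
    intro w
    obtain ⟨k, -, hk⟩ := Finset.exists_min_image (Finset.univ : Finset (Option (Fin n) ⊕ Finset (Fin n)))
      (fun k => G.dist (x k) w) ⟨.inl none, Finset.mem_univ _⟩
    exact ⟨k, fun l => hk l (Finset.mem_univ _)⟩
  choose own hown using hown
  -- crossing
  have hcross : ∀ w ∈ S, ∀ w' ∈ S, G.Adj w w' → own w ≠ own w' →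
      (HAdj (own w) (own w') ∧ ∃ u, (u = w ∨ u = w') ∧
        ∀ l, l ≠ own w → l ≠ own w' → ℓ < G.dist (x l) u) ∨
      ((∀ l, ℓ ≤ G.dist (x l) w) ∧ (∀ l, ℓ ≤ G.dist (x l) w')) := by
    intro w hw w' hw' hadj hne
    have step : ∀ k, G.dist (x k) w' ≤ G.dist (x k) w + 1 ∧ G.dist (x k) w ≤ G.dist (x k) w' + 1 := by
      intro k
      have h1 := (hSr w hw k).dist_triangle_left w'
      have h2 := (hSr w' hw' k).dist_triangle_left w
      have h3 := dist_eq_one_iff_adj.2 hadj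
      have h4 := dist_eq_one_iff_adj.2 hadj.symm
      omega
    have o1 := hown w
    have o2 := hown w'
    rcases le_total (G.dist (x (own w')) w') (G.dist (x (own w)) w) with h | h
    · rcases hP w hw (own w) (own w') hne o1 (by have := step (own w'); omega) with ⟨h1, h2⟩ | ⟨h1, h2⟩
      · exact Or.inl ⟨h1, w, Or.inl rfl, h2⟩
      · right
        have := step (own w')
        exact ⟨fun l => by have := o1 l; omega, fun l => by have := o2 l; omega⟩
    · rcases hP w' hw' (own w') (own w) hne.symm o2 (by have := step (own w); omega) with ⟨h1, h2⟩ | ⟨h1, h2⟩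
      · exact Or.inl ⟨h1.symm, w', Or.inr rfl, fun l a b => h2 l b a⟩
      · right
        have := step (own w)
        exact ⟨fun l => by have := o1 l; omega, fun l => by have := o2 l; omega⟩
  have hxS : ∀ k, x k ∈ S := by
    intro k
    rcases k with k | b
    · refine ⟨.inl k, .inr Finset.univ, 0, by cases k <;> simp [HAdj], by omega, (hg0 _ _).symm⟩
    · exact ⟨.inr b, .inl none, 0, by simp [HAdj], by omega, (hg0 _ _).symm⟩
  have hx0 : ∀ k, own (x k) = k := by
    intro k
    by_contra hne
    have h1 : G.dist (x (own (x k))) (x k) ≤ 0 := by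
      have := hown (x k) k
      rwa [SimpleGraph.dist_self] at this
    obtain ⟨j, hj1, hj2⟩ : ∃ j, j ≠ k ∧ j ≠ own (x k) := by
      have hc : ∃ j ∈ (Finset.univ : Finset (Option (Fin n) ⊕ Finset (Fin n))), j ∉ ({k, own (x k)} : Finset _) := by
        refine Finset.exists_mem_notMem_of_card_lt_card ?_
        refine (Finset.card_le_two).trans_lt ?_
        simp only [Finset.card_univ, Fintype.card_sum, Fintype.card_option, Fintype.card_fin,
          Fintype.card_finset]
        have := Nat.lt_two_pow_self (n := n)
        omega
      obtain ⟨j, -, hj⟩ := hc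
      simp at hj
      exact ⟨j, hj.1, hj.2⟩
    have := hfar k j (own (x k)) hj1.symm hne hj2.symm (G.dist (x k) (x j) / 2) (by omega) (by omega) (by omega)
    have h5 := (hr (own (x k)) k).dist_triangle_left (g (x k) (x j) (G.dist (x k) (x j) / 2))
    have h6 := (hdl k j (G.dist (x k) (x j) / 2) (by omega)).1
    have h7 := hD k j hj1.symm
    omega
  have hnear : ∀ (r : Fin n) (b : Finset (Fin n)),
      (⟨x (.inl (some r)), hxS _⟩ : S) ∈ gball (G.induce S) ⟨x (.inr b), hxS _⟩ (2 * ℓ) ↔ r ∈ b := by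
    intro r b
    constructor
    · intro hmem
      by_contra hrb
      unfold gball at hmem
      rw [Set.mem_ofPred_eq, SimpleGraph.edist_comm] at hmem
      obtain ⟨p, hp⟩ := exists_walk_of_edist_ne_top (ne_top_of_le_ne_top (ENat.natCast_ne_top _) hmem)
      rw [← hp] at hmem
      have hlen : p.length ≤ 2 * ℓ := by exact_mod_cast hmem
      let w : ℕ → V := fun s => (p.getVert s : S).val
      have hwS : ∀ s, w s ∈ S := fun s => (p.getVert s).2
      have hw0 : w 0 = x (.inl (some r)) := by simp [w]
      have hwL : w p.length = x (.inr b) := by simp [w]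
      have hwadj : ∀ s < p.length, G.Adj (w s) (w (s+1)) := by
        intro s hs
        exact p.adj_getVert_succ hs
      have hd1 : ∀ s ≤ p.length, G.dist (x (.inl (some r))) (w s) ≤ s := by
        intro s hs
        obtain ⟨q, hq⟩ := adjseq_walk G w _ hwadj 0 s (by omega) hs
        have := dist_le q
        rw [hq, hw0] at this
        omega
      have hd2 : ∀ s ≤ p.length, G.dist (x (.inr b)) (w s) ≤ p.length - s := by
        intro s hs
        obtain ⟨q, hq⟩ := adjseq_walk G w _ hwadj s _ hs le_rfl
        have := dist_le q
        rw [hq, hwL, SimpleGraph.dist_comm] at this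
        omega
      have hnomid : ∀ s < p.length, ¬ ((∀ l, ℓ ≤ G.dist (x l) (w s)) ∧ (∀ l, ℓ ≤ G.dist (x l) (w (s+1)))) := by
        rintro s hs ⟨h1, h2⟩
        have a1 := h1 (.inl (some r))
        have a2 := h2 (.inr b)
        have a3 := hd1 s (by omega)
        have a4 := hd2 (s+1) (by omega)
        omega
      obtain ⟨s, hs, hne, h1, h2, h3, h4⟩ := owner_walk r b hrb p.length (fun s => own (w s))
        (by rw [hw0, hx0]) (by rw [hwL, hx0]) (by
          intro s hs hne
          rcases hcross _ (hwS s) _ (hwS (s+1)) (hwadj s hs) hne with h | h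
          · exact h.1
          · exact absurd h (hnomid s hs))
      rcases hcross _ (hwS s) _ (hwS (s+1)) (hwadj s hs) hne with ⟨-, u, hu, h⟩ | h
      · have b1 := h _ h1 h2
        have b2 := h _ h3 h4
        rcases hu with rfl | rfl
        · have a3 := hd1 s (by omega)
          have a4 := hd2 s (by omega)
          omega
        · have a3 := hd1 (s+1) (by omega)
          have a4 := hd2 (s+1) (by omega)
          omega
      · exact absurd h (hnomid s hs)
    · intro hrb
      have hadj : HAdj (.inl (some r)) (.inr b) := hrb
      let D := G.dist (x (.inl (some r))) (x (.inr b))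
      have hm : ∀ t, t ≤ D → g (x (.inl (some r))) (x (.inr b)) t ∈ S :=
        fun t ht => ⟨_, _, t, hadj, ht, rfl⟩
      let w : ℕ → S := fun t => ⟨g (x (.inl (some r))) (x (.inr b)) (min t D), hm _ (min_le_right _ _)⟩
      obtain ⟨q, hq⟩ := adjseq_walk (G.induce S) w D (by
        intro s hs
        have := (hg _ _ (hr (.inl (some r)) (.inr b))).2.2 s hs
        simp only [w, comap_adj, Function.Embedding.subtype_apply]
        rwa [min_eq_left (by omega), min_eq_left (by omega)]) 0 D (by omega) le_rfl
      have e1 : w 0 = ⟨x (.inl (some r)), hxS _⟩ := Subtype.ext (by simp [w, hg0])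
      have e2 : w D = ⟨x (.inr b), hxS _⟩ := Subtype.ext (by simp [w, D, hgD])
      have := edist_le q
      rw [hq, e1, e2] at this
      unfold gball
      rw [Set.mem_ofPred_eq, SimpleGraph.edist_comm]
      refine this.trans ?_
      have := hD (.inl (some r)) (.inr b) (by simp)
      exact_mod_cast (by omega : D - 0 ≤ 2 * ℓ)
  let xx : Fin n → S := fun r => ⟨x (.inl (some r)), hxS _⟩
  have hinj : Function.Injective xx := by
    intro r r' h
    have h1 : x (.inl (some r)) = x (.inl (some r')) := congrArg Subtype.val h
    have h2 := hx0 (.inl (some r))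
    rw [h1, hx0] at h2
    simpa using h2.symm
  refine ⟨S, Set.range xx, ?_, ?_⟩
  · intro Y hY
    refine ⟨⟨x (.inr (Finset.univ.filter fun r => xx r ∈ Y)), hxS _⟩, 2 * ℓ, ?_⟩
    ext y
    constructor
    · rintro ⟨h, r, rfl⟩
      have := (hnear r _).1 h
      simpa using this
    · intro hy
      obtain ⟨r, rfl⟩ := hY hy
      exact ⟨(hnear r _).2 (by simpa using hy), r, rfl⟩
  · rw [← Set.image_univ, Set.ncard_image_of_injective _ hinj, Set.ncard_univ]
    simp

end EP

namespace EP

lemma ramsey (a b : ℕ) : ∃ R : ℕ, ∀ (ι : Type) (r : ι → ι → Prop), (∀ i j, r i j → r j i) →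
    ∀ s : Finset ι, R ≤ s.card → (∃ t ⊆ s, t.card = a ∧ (t : Set ι).Pairwise r) ∨
      (∃ t ⊆ s, t.card = b ∧ (t : Set ι).Pairwise fun i j => ¬ r i j) := by
  classical
  induction a generalizing b with
  | zero => exact ⟨0, fun ι r _ s _ => Or.inl ⟨∅, by simp, by simp, by simp⟩⟩
  | succ a iha =>
    induction b with
    | zero => exact ⟨0, fun ι r _ s _ => Or.inr ⟨∅, by simp, by simp, by simp⟩⟩
    | succ b ihb =>
      obtain ⟨R1, h1⟩ := iha (b+1)
      obtain ⟨R2, h2⟩ := ihb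
      refine ⟨R1 + R2 + 1, fun ι r hr s hs => ?_⟩
      obtain ⟨v, hv⟩ : s.Nonempty := Finset.card_pos.1 (by omega)
      let s1 := (s.erase v).filter fun u => r v u
      let s2 := (s.erase v).filter fun u => ¬ r v u
      have hc : s1.card + s2.card = (s.erase v).card := Finset.card_filter_add_card_filter_not _
      rw [Finset.card_erase_of_mem hv] at hc
      have hs1 : s1 ⊆ s := (Finset.filter_subset _ _).trans (Finset.erase_subset _ _)
      have hs2 : s2 ⊆ s := (Finset.filter_subset _ _).trans (Finset.erase_subset _ _)
      by_cases hR : R1 ≤ s1.card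
      · rcases h1 ι r hr s1 hR with ⟨t, ht, hta, htr⟩ | ⟨t, ht, hta, htr⟩
        · left
          have hvt : v ∉ t := fun h => by simpa [s1] using ht h
          refine ⟨insert v t, Finset.insert_subset hv (ht.trans hs1), ?_, ?_⟩
          · rw [Finset.card_insert_of_notMem hvt, hta]
          · rw [Finset.coe_insert]
            refine htr.insert fun u hu _ => ?_
            have := (Finset.mem_filter.1 (ht hu)).2
            exact ⟨this, hr _ _ this⟩
        · exact Or.inr ⟨t, ht.trans hs1, hta, htr⟩
      · rcases h2 ι r hr s2 (by omega) with ⟨t, ht, hta, htr⟩ | ⟨t, ht, hta, htr⟩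
        · exact Or.inl ⟨t, ht.trans hs2, hta, htr⟩
        · right
          have hvt : v ∉ t := fun h => by simpa [s2] using ht h
          refine ⟨insert v t, Finset.insert_subset hv (ht.trans hs2), ?_, ?_⟩
          · rw [Finset.card_insert_of_notMem hvt, hta]
          · rw [Finset.coe_insert]
            refine htr.insert fun u hu _ => ?_
            have := (Finset.mem_filter.1 (ht hu)).2
            exact ⟨this, fun h => this (hr _ _ h)⟩

variable {V : Type*}

lemma sum_prod_weights [Fintype V] {ι : Type*} [Fintype ι] [DecidableEq ι] (c : V → ℝ)
    (h1 : ∑ v, c v = 1) : ∑ x : ι → V, ∏ i, c (x i) = 1 := by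
  have := Finset.prod_univ_sum (R := ℝ) (ι := ι) (fun _ => (Finset.univ : Finset V)) (fun _ v => c v)
  rw [Fintype.piFinset_univ] at this
  rw [← this, h1]; simp

open Classical in
lemma sample_one [Fintype V] (c : V → ℝ) (h0 : ∀ v, 0 ≤ c v) (h1 : ∑ v, c v = 1) (β : ℝ) {R : ℕ}
    (k : Fin (R+1)) (P : (Fin (R+1) → V) → V → Prop)
    (hP : ∀ x v, P (Function.update x k v) = P x)
    (hβ : ∀ x, (∑ u, if P x u then c u else 0) ≤ β) :
    ∑ x : Fin (R+1) → V, (∏ i, c (x i)) * (if P x (x k) then 1 else 0) ≤ β := by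
  rw [← (Fin.insertNthEquiv (fun _ => V) k).sum_comp, Fintype.sum_prod_type, Finset.sum_comm]
  simp only [Fin.insertNthEquiv_apply, Fin.insertNth_apply_same]
  have key : ∀ y : Fin R → V, ∑ v : V, (∏ i, c ((k.insertNth v y : Fin (R+1) → V) i)) *
      (if P (k.insertNth v y) v then 1 else 0) ≤ (∏ i, c (y i)) * β := by
    intro y
    by_cases hV : Nonempty V
    · obtain ⟨v0⟩ := hV
      have hPP : ∀ v, P (k.insertNth v y) = P (k.insertNth v0 y) := by
        intro v
        rw [← hP (k.insertNth v0 y) v]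
        simp
      refine le_trans (le_of_eq ?_) (mul_le_mul_of_nonneg_left (hβ (k.insertNth v0 y))
        (Finset.prod_nonneg fun i _ => h0 _))
      rw [Finset.mul_sum]
      refine Finset.sum_congr rfl fun v _ => ?_
      rw [Fin.prod_univ_succAbove _ k, hPP v]
      simp only [Fin.insertNth_apply_same, Fin.insertNth_apply_succAbove]
      split_ifs <;> ring
    · have : IsEmpty V := not_nonempty_iff.1 hV
      simp at h1
  refine (Finset.sum_le_sum fun y _ => key y).trans ?_
  rw [← Finset.sum_mul, sum_prod_weights c h1, one_mul]

lemma sample [Fintype V] (c : V → ℝ) (h0 : ∀ v, 0 ≤ c v) (h1 : ∑ v, c v = 1) (β : ℝ) {R : ℕ}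
    {T : Type} [Fintype T]
    (k : T → Fin (R+1)) (P : T → (Fin (R+1) → V) → V → Prop)
    (hP : ∀ τ x v, P τ (Function.update x (k τ) v) = P τ x)
    (hβ : ∀ τ x, (open Classical in ∑ u, if P τ x u then c u else 0) ≤ β)
    (hT : Fintype.card T * β < 1) :
    ∃ x : Fin (R+1) → V, ∀ τ, ¬ P τ x (x (k τ)) := by
  classical
  by_contra hcon
  push Not at hcon
  have hs : ∑ τ : T, ∑ x : Fin (R+1) → V, (∏ i, c (x i)) * (if P τ x (x (k τ)) then 1 else 0) ≤
      Fintype.card T * β := by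
    refine (Finset.sum_le_sum fun τ _ =>
      sample_one c h0 h1 β (k τ) (P τ) (hP τ) (fun x => ?_)).trans ?_
    · convert hβ τ x
    · simp
  rw [Finset.sum_comm] at hs
  have h2 : (1 : ℝ) ≤ ∑ x : Fin (R+1) → V, ∑ τ : T, (∏ i, c (x i)) * (if P τ x (x (k τ)) then 1 else 0) := by
    refine (sum_prod_weights (ι := Fin (R+1)) c h1).symm.le.trans ?_
    refine Finset.sum_le_sum fun x _ => ?_
    obtain ⟨τ, hτ⟩ := hcon x
    have hp : 0 ≤ ∏ i, c (x i) := Finset.prod_nonneg fun i _ => h0 _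
    refine le_trans (le_of_eq ?_) (Finset.single_le_sum (f := fun τ => (∏ i, c (x i)) * (if P τ x (x (k τ)) then 1 else 0)) (fun τ _ => ?_) (Finset.mem_univ τ))
    · simp [hτ]
    · split_ifs <;> simp [hp]
  linarith

theorem frac (ν d : ℕ) : ∃ β : ℝ, 0 < β ∧ ∀ (ℓ : ℕ) (V : Type) (_ : Fintype V) (G : SimpleGraph V),
    (∀ C : Finset V, (C : Set V).Pairwise (fun u w => Disjoint (gball G u ℓ) (gball G w ℓ)) →
      C.card ≤ ν) → distVCdimLE G d →
    ∀ c : V → ℝ, (∀ v, 0 ≤ c v) → ∑ v, c v = 1 →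
      ∃ v, β ≤ (open Classical in ∑ u, if v ∈ gball G u ℓ then c u else 0) := by
  classical
  let I := Option (Fin (d+1)) ⊕ Finset (Fin (d+1))
  obtain ⟨R, hR⟩ := ramsey (Fintype.card I) (ν+1)
  refine ⟨1 / (3 * (R+1)^3 + 1), by positivity, fun ℓ V _ G hpack hvc c h0 h1 => ?_⟩
  by_contra hcon
  push Not at hcon
  obtain ⟨g, hg⟩ := exists_geo G
  let M : Fin 3 → V → V → V := fun r u v =>
    g u v (if r = 0 then (G.dist u v - 1) / 2 else if r = 1 then G.dist u v / 2 else G.dist u v / 2 + 1)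
  let T := (Fin (R+1) × Fin (R+1) × Fin (R+1)) × Fin 3
  obtain ⟨x, hx⟩ := sample c h0 h1 (1 / (3 * (R+1)^3 + 1)) (R := R) (T := T) (fun τ => τ.1.2.2)
    (fun τ x u => τ.1.2.2 ≠ τ.1.1 ∧ τ.1.2.2 ≠ τ.1.2.1 ∧ M τ.2 (x τ.1.1) (x τ.1.2.1) ∈ gball G u ℓ) (by
      rintro ⟨⟨i, j, k⟩, r⟩ x v
      funext u
      simp only [eq_iff_iff]
      refine and_congr_right fun hi => and_congr_right fun hj => ?_
      rw [Function.update_of_ne (Ne.symm hi), Function.update_of_ne (Ne.symm hj)]) (by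
      rintro ⟨⟨i, j, k⟩, r⟩ x
      refine le_trans ?_ (hcon (M r (x i) (x j))).le
      refine Finset.sum_le_sum fun u _ => ?_
      dsimp only
      split_ifs with h h' h'
      · exact le_rfl
      · exact absurd h.2.2 h'
      · exact h0 u
      · exact le_rfl) (by
      simp only [T, Fintype.card_prod, Fintype.card_fin]
      rw [mul_one_div, div_lt_one (by positivity)]
      push_cast
      nlinarith)
  have hself : ∀ u, u ∈ gball G u ℓ := fun u => by simp [gball]
  rcases hR (Fin (R+1)) (fun i j => ¬ Disjoint (gball G (x i) ℓ) (gball G (x j) ℓ))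
    (fun i j h h' => h h'.symm) Finset.univ (by simp) with ⟨t, -, htc, ht⟩ | ⟨t, -, htc, ht⟩
  · have hcard : Fintype.card I = Fintype.card t := by rw [Fintype.card_coe, htc]
    let e : I ≃ t := Fintype.equivOfCardEq hcard
    have hne : ∀ {i j : I}, i ≠ j → (e i : Fin (R+1)) ≠ e j := fun h h' => h (e.injective (Subtype.ext h'))
    have hed : ∀ i j : I, i ≠ j → G.edist (x (e i)) (x (e j)) ≤ ((2 * ℓ : ℕ) : ℕ∞) := by
      intro i j hij
      have : ¬ Disjoint _ _ := ht (e i).2 (e j).2 (hne hij)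
      rw [Set.not_disjoint_iff] at this
      obtain ⟨w, hw1, hw2⟩ := this
      simp only [gball, Set.mem_ofPred_eq] at hw1 hw2
      rw [SimpleGraph.edist_comm] at hw2
      refine (G.edist_triangle (v := w)).trans ((add_le_add hw1 hw2).trans ?_)
      push_cast
      rw [two_mul]
    have hr : ∀ i j : I, G.Reachable (x (e i)) (x (e j)) := by
      intro i j
      by_cases hij : i = j
      · subst hij; exact Reachable.refl _
      · exact reachable_of_edist_ne_top (ne_top_of_le_ne_top (ENat.natCast_ne_top _) (hed i j hij))
    obtain ⟨S, X, hX, hXc⟩ := core G ℓ (d+1) (fun i => x (e i)) g (by omega) hg hr (by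
      intro i j hij
      have := hed i j hij
      rw [← (hr i j).coe_dist_eq_edist] at this
      exact_mod_cast this) (by
      intro i j k hij hki hkj t ht h1 h2
      obtain ⟨r, hrr⟩ : ∃ r, M r (x (e i)) (x (e j)) = g (x (e i)) (x (e j)) t := by
        have : t = (G.dist (x (e i)) (x (e j)) - 1) / 2 ∨ t = G.dist (x (e i)) (x (e j)) / 2 ∨
          t = G.dist (x (e i)) (x (e j)) / 2 + 1 := by omega
        rcases this with h | h | h
        · exact ⟨0, by simp [M, h]⟩
        · exact ⟨1, by simp [M, h]⟩
        · exact ⟨2, by simp [M, h]⟩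
      have := hx ((e i, e j, e k), r)
      simp only [ne_eq, not_and] at this
      have h3 := this (hne hki) (hne hkj)
      rw [hrr] at h3
      by_contra hlt
      push Not at hlt
      apply h3
      have hreach : G.Reachable (x (e k)) (g (x (e i)) (x (e j)) t) := by
        have hgg := hg _ _ (hr i j)
        obtain ⟨p, -⟩ := adjseq_walk G _ _ hgg.2.2 0 t (by omega) ht
        rw [hgg.1] at p
        exact (hr k i).trans ⟨p⟩
      simp only [gball, Set.mem_ofPred_eq]
      rw [← hreach.coe_dist_eq_edist]
      exact_mod_cast hlt)
    have := hvc S X hX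
    omega
  · have hinj : Set.InjOn x t := by
      intro i hi j hj hij
      by_contra hne
      have : ¬ ¬ Disjoint (gball G (x i) ℓ) (gball G (x j) ℓ) := ht hi hj hne
      rw [hij] at this
      exact this (fun h => Set.disjoint_left.1 h (hself _) (hself _))
    have := hpack (t.image x) (by
      intro u hu w hw huw
      simp only [Finset.coe_image, Set.mem_image, Finset.mem_coe] at hu hw
      obtain ⟨i, hi, rfl⟩ := hu
      obtain ⟨j, hj, rfl⟩ := hw
      have := ht hi hj (fun h => huw (by rw [h]))
      simpa using this)
    rw [Finset.card_image_of_injOn hinj] at this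
    omega

end EP

namespace EP

lemma dual {V : Type*} [Fintype V] [Nonempty V] (a : V → V → ℝ) (β : ℝ)
    (h : ∀ c : V → ℝ, (∀ v, 0 ≤ c v) → ∑ v, c v = 1 → ∃ v, β ≤ ∑ u, a u v * c u) :
    ∃ p : V → ℝ, (∀ v, 0 ≤ p v) ∧ ∑ v, p v = 1 ∧ ∀ u, β ≤ ∑ v, a u v * p v := by
  classical
  let A : (V → ℝ) →ₗ[ℝ] (V → ℝ) := Matrix.mulVecLin (Matrix.of a)
  have hA : ∀ p u, A p u = ∑ v, a u v * p v := by
    intro p u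
    simp [A, Matrix.mulVec, dotProduct]
  let K : Set (V → ℝ) := A '' stdSimplex ℝ V
  by_cases hdis : Disjoint K (Set.Ici (fun _ => β))
  · exfalso
    obtain ⟨f, s, t, hs, hst, ht⟩ := geometric_hahn_banach_compact_closed
      ((convex_stdSimplex ℝ V).linear_image A)
      ((isCompact_stdSimplex ℝ V).image (LinearMap.continuous_of_finiteDimensional A))
      (convex_Ici (fun _ => β)) isClosed_Ici hdis
    let c : V → ℝ := fun u => f (Pi.single u 1)
    have hf : ∀ y : V → ℝ, f y = ∑ u, y u * c u := by
      intro y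
      conv_lhs => rw [← Finset.univ_sum_single y]
      rw [map_sum]
      refine Finset.sum_congr rfl fun u _ => ?_
      have : (Pi.single u (y u) : V → ℝ) = y u • Pi.single u (1 : ℝ) := by
        rw [← Pi.single_smul]; simp
      rw [this, map_smul, smul_eq_mul]
    have hβ : t < f (fun _ => β) := ht _ (Set.mem_Ici.2 le_rfl)
    have hc0 : ∀ u, 0 ≤ c u := by
      intro u
      by_contra hneg
      push Not at hneg
      obtain ⟨n, hn⟩ := exists_nat_gt ((f (fun _ => β) - t) / (- c u))
      rw [div_lt_iff₀ (by linarith)] at hn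
      have := ht ((fun _ => β) + (n : ℝ) • Pi.single u (1:ℝ)) (by
        rw [Set.mem_Ici]
        refine le_add_of_nonneg_right ?_
        refine smul_nonneg (Nat.cast_nonneg n) ?_
        rw [Pi.single_nonneg]; exact zero_le_one)
      rw [map_add, map_smul, smul_eq_mul] at this
      change t < _ + n * c u at this
      linarith
    have hvert : ∀ v, f (fun u => a u v) < s := by
      intro v
      refine hs _ ⟨Pi.single v 1, single_mem_stdSimplex ℝ v, ?_⟩
      funext u
      rw [hA]
      simp [Pi.single_apply]
    obtain ⟨v0⟩ := ‹Nonempty V›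
    have hS : 0 < ∑ u, c u := by
      refine lt_of_le_of_ne (Finset.sum_nonneg fun u _ => hc0 u) fun h0 => ?_
      have hz : ∀ u, c u = 0 := fun u =>
        (Finset.sum_eq_zero_iff_of_nonneg (fun u _ => hc0 u)).1 h0.symm u (Finset.mem_univ u)
      have h1 := hvert v0
      rw [hf] at h1 hβ
      simp only [hz, mul_zero, Finset.sum_const_zero] at h1 hβ
      linarith
    obtain ⟨v, hv⟩ := h (fun u => c u / ∑ u, c u) (fun u => div_nonneg (hc0 u) hS.le) (by
      rw [← Finset.sum_div, div_self hS.ne'])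
    have h1 := hvert v
    rw [hf] at h1 hβ
    simp only [← mul_div_assoc] at hv
    rw [← Finset.sum_div, le_div_iff₀ hS, Finset.mul_sum] at hv
    linarith
  · rw [Set.not_disjoint_iff] at hdis
    obtain ⟨y, ⟨p, hp, rfl⟩, hy⟩ := hdis
    exact ⟨p, hp.1, hp.2, fun u => by rw [← hA]; exact hy u⟩

lemma exists_m (K d : ℕ) : ∃ m : ℕ, 0 < m ∧ 2 * ((d + 1) * (2 * (m * (K * m))) ^ d) < 2 ^ m := by
  have h := tendsto_pow_const_div_const_pow_of_one_lt (2 * d) (r := (2:ℝ)) one_lt_two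
  let C : ℝ := 2 * ((d + 1) * (2 * K) ^ d) + 1
  have hC : 0 < C := by positivity
  obtain ⟨m, hm, hm0⟩ := ((h.eventually (gt_mem_nhds (show (0:ℝ) < 1 / C by positivity))).and
    (Filter.eventually_gt_atTop 0)).exists
  refine ⟨m, hm0, ?_⟩
  rw [div_lt_div_iff₀ (by positivity) hC, one_mul] at hm
  have h2 : (2 * ((d + 1) * (2 * (m * (K * m))) ^ d) : ℝ) ≤ (m:ℝ) ^ (2 * d) * C := by
    have : (2 * (m * (K * m)) : ℝ) ^ d = (2 * K) ^ d * m ^ (2 * d) := by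
      rw [pow_mul, ← mul_pow]; ring
    rw [this]
    have : (0:ℝ) ≤ (m:ℝ) ^ (2 * d) := by positivity
    simp only [C]
    nlinarith
  have := h2.trans_lt hm
  exact_mod_cast this

lemma trace_card {V Q : Type*} [Fintype V] [Fintype Q] [DecidableEq Q] [Nonempty Q] (F : V → Set V) (d : ℕ)
    (hF : ∀ X : Finset V, (∀ Y ⊆ X, ∃ v, ∀ w ∈ X, w ∈ F v ↔ w ∈ Y) → X.card ≤ d)
    (pt : Q → V) (𝒜 : Finset (Finset Q)) (h𝒜 : ∀ t ∈ 𝒜, ∃ v, ∀ q, q ∈ t ↔ pt q ∈ F v) :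
    𝒜.card ≤ (d + 1) * (Fintype.card Q) ^ d := by
  classical
  have hvc : 𝒜.vcDim ≤ d := by
    refine Finset.sup_le fun s hs => ?_
    rw [Finset.mem_shatterer] at hs
    have hinj : Set.InjOn pt s := by
      intro q hq q' hq' heq
      obtain ⟨t, ht, hst⟩ := hs.exists_inter_eq_singleton hq
      obtain ⟨v, hv⟩ := h𝒜 t ht
      have h1 : q ∈ t := (Finset.mem_inter.1 (hst ▸ Finset.mem_singleton_self q : q ∈ s ∩ t)).2
      have h2 : q' ∈ t := by rw [hv, ← heq, ← hv]; exact h1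
      have h3 : q' ∈ s ∩ t := Finset.mem_inter.2 ⟨hq', h2⟩
      rw [hst] at h3
      exact (Finset.mem_singleton.1 h3).symm
    rw [← Finset.card_image_of_injOn hinj]
    refine hF _ fun Y hY => ?_
    obtain ⟨t, ht, hst⟩ := hs (Finset.filter_subset (fun q => pt q ∈ Y) s)
    obtain ⟨v, hv⟩ := h𝒜 t ht
    refine ⟨v, fun w hw => ?_⟩
    obtain ⟨q, hq, rfl⟩ := Finset.mem_image.1 hw
    rw [← hv]
    constructor
    · intro h
      have : q ∈ s ∩ t := Finset.mem_inter.2 ⟨hq, h⟩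
      rw [hst] at this
      exact (Finset.mem_filter.1 this).2
    · intro h
      have : q ∈ s ∩ t := by rw [hst]; exact Finset.mem_filter.2 ⟨hq, h⟩
      exact (Finset.mem_inter.1 this).2
  refine (Finset.card_le_card_shatterer 𝒜).trans (Finset.card_shatterer_le_sum_vcDim.trans ?_)
  have hQ : 1 ≤ Fintype.card Q := Fintype.card_pos
  calc ∑ k ∈ Finset.Iic 𝒜.vcDim, (Fintype.card Q).choose k
      ≤ ∑ k ∈ Finset.Iic d, (Fintype.card Q).choose k :=
        Finset.sum_le_sum_of_subset (Finset.Iic_subset_Iic.2 hvc)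
    _ ≤ ∑ k ∈ Finset.Iic d, (Fintype.card Q) ^ d := by
        refine Finset.sum_le_sum fun k hk => ?_
        exact (Nat.choose_le_pow _ _).trans (Nat.pow_le_pow_right hQ (Finset.mem_Iic.1 hk))
    _ = _ := by simp

open Classical in
lemma miss_sum {V : Type*} [Fintype V] (p : V → ℝ) (h0 : ∀ v, 0 ≤ p v) (h1 : ∑ v, p v = 1) (m s : ℕ)
    (F : Set V) (i : Fin m) :
    ∑ y : Fin m × Fin s → V, (∏ j, p (y j)) * (if ∀ t, y (i, t) ∉ F then 1 else 0)
      = (∑ v, if v ∉ F then p v else 0) ^ s := by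
  have := Finset.prod_univ_sum (R := ℝ) (ι := Fin m × Fin s) (fun _ => (Finset.univ : Finset V))
    (fun j v => p v * (if j.1 = i ∧ v ∈ F then 0 else 1))
  rw [Fintype.piFinset_univ] at this
  have h2 : ∀ y : Fin m × Fin s → V, (∏ j, p (y j)) * (if ∀ t, y (i, t) ∉ F then 1 else 0) =
      ∏ j, (p (y j) * (if j.1 = i ∧ y j ∈ F then 0 else 1)) := by
    intro y
    rw [Finset.prod_mul_distrib]
    congr 1
    split_ifs with h
    · symm
      refine Finset.prod_eq_one fun j _ => ?_
      rw [if_neg]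
      rintro ⟨rfl, h'⟩
      exact h j.2 h'
    · push Not at h
      obtain ⟨t, ht⟩ := h
      symm
      refine Finset.prod_eq_zero (Finset.mem_univ (i, t)) ?_
      simp [ht]
  simp only [h2]
  rw [← this, Fintype.prod_prod_type, Finset.prod_eq_single i]
  · simp only [true_and, Finset.prod_const, Finset.card_univ, Fintype.card_fin]
    congr 1
    refine Finset.sum_congr rfl fun v _ => ?_
    split_ifs <;> simp_all
  · intro b _ hb
    simp [hb, h1]
  · simp

lemma swap_sum {V : Type*} [Fintype V] (p : V → ℝ) (m s : ℕ) (σ : Fin m → Bool)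
    (Φ : (Fin m × Fin s → V) × (Fin m × Fin s → V) → ℝ) :
    ∑ z : (Fin m × Fin s → V) × (Fin m × Fin s → V), ((∏ j, p (z.1 j)) * ∏ j, p (z.2 j)) * Φ z =
    ∑ z : (Fin m × Fin s → V) × (Fin m × Fin s → V), ((∏ j, p (z.1 j)) * ∏ j, p (z.2 j)) *
      Φ (fun j => if σ j.1 then z.2 j else z.1 j, fun j => if σ j.1 then z.1 j else z.2 j) := by
  let sw : (Fin m × Fin s → V) × (Fin m × Fin s → V) → (Fin m × Fin s → V) × (Fin m × Fin s → V) :=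
    fun z => (fun j => if σ j.1 then z.2 j else z.1 j, fun j => if σ j.1 then z.1 j else z.2 j)
  have hsw : Function.Involutive sw := by
    intro z
    refine Prod.ext ?_ ?_ <;> funext j <;> simp only [sw] <;> split_ifs <;> rfl
  rw [← Equiv.sum_comp hsw.toPerm]
  refine Finset.sum_congr rfl fun z _ => ?_
  change ((∏ j, p ((sw z).1 j)) * ∏ j, p ((sw z).2 j)) * Φ (sw z) = _ * Φ (sw z)
  congr 1
  rw [← Finset.prod_mul_distrib, ← Finset.prod_mul_distrib]
  refine Finset.prod_congr rfl fun j _ => ?_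
  simp only [sw]
  split_ifs
  · ring
  · rfl

theorem net (β : ℝ) (hβ : 0 < β) (d : ℕ) : ∃ N : ℕ, ∀ (V : Type) (_ : Fintype V) (F : V → Set V),
    (∀ X : Finset V, (∀ Y ⊆ X, ∃ v, ∀ w ∈ X, w ∈ F v ↔ w ∈ Y) → X.card ≤ d) →
    ∀ p : V → ℝ, (∀ v, 0 ≤ p v) → ∑ v, p v = 1 →
    (∀ u, β ≤ (open Classical in ∑ v, if v ∈ F u then p v else 0)) →
    ∃ T : Finset V, T.card ≤ N ∧ ∀ u, ∃ t ∈ T, t ∈ F u := by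
  classical
  obtain ⟨K, hK⟩ := exists_nat_gt (2 / β)
  obtain ⟨m, hmpos, hm⟩ := exists_m K d
  rw [div_lt_iff₀ hβ] at hK
  let s := K * m
  refine ⟨m * s, fun V _ F hF p h0 h1 hp => ?_⟩
  by_contra hcon
  push Not at hcon
  have hmiss : ∀ x : Fin m × Fin s → V, ∃ u, ∀ j, x j ∉ F u := by
    intro x
    obtain ⟨u, hu⟩ := hcon (Finset.univ.image x) (Finset.card_image_le.trans (by simp))
    exact ⟨u, fun j => hu _ (Finset.mem_image_of_mem _ (Finset.mem_univ j))⟩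
  let Good : (Fin m × Fin s → V) × (Fin m × Fin s → V) → Prop := fun z =>
    ∃ u, (∀ j, z.1 j ∉ F u) ∧ ∀ i, ∃ t, z.2 (i, t) ∈ F u
  let w : (Fin m × Fin s → V) → ℝ := fun x => ∏ j, p (x j)
  have hw0 : ∀ x, 0 ≤ w x := fun x => Finset.prod_nonneg fun j _ => h0 _
  have hw1 : ∑ x, w x = 1 := sum_prod_weights p h1
  have hKβ : (m : ℝ) * 2 ≤ s * β := by
    simp only [s]; push_cast
    nlinarith [(Nat.cast_nonneg m : (0:ℝ) ≤ m)]
  have hq : ∀ u, (m : ℝ) * (∑ v, if v ∉ F u then p v else 0) ^ s ≤ 1 / 2 := by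
    intro u
    set q := ∑ v, if v ∉ F u then p v else 0 with hqd
    have hq0 : 0 ≤ q := Finset.sum_nonneg fun v _ => by split_ifs <;> simp [h0]
    have hq1 : q ≤ 1 - β := by
      have h2 : q + (∑ v, if v ∈ F u then p v else 0) = 1 := by
        rw [hqd, ← Finset.sum_add_distrib, ← h1]
        refine Finset.sum_congr rfl fun v _ => ?_
        by_cases hv : v ∈ F u <;> simp [hv]
      linarith [hp u]
    have h3 : q ^ s * (1 + β) ^ s ≤ 1 := by
      rw [← mul_pow]
      exact pow_le_one₀ (by positivity) (by nlinarith)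
    have h4 : 1 + (s:ℝ) * β ≤ (1 + β) ^ s := one_add_mul_le_pow (by linarith) s
    have h5 : 0 ≤ q ^ s := by positivity
    nlinarith
  have hlow : ∀ x, (1:ℝ) / 2 ≤ ∑ y, w y * (if Good (x, y) then 1 else 0) := by
    intro x
    obtain ⟨u, hu⟩ := hmiss x
    have h2 : ∀ y, w y ≤ w y * (if Good (x, y) then 1 else 0) +
        ∑ i : Fin m, w y * (if ∀ t, y (i, t) ∉ F u then 1 else 0) := by
      intro y
      by_cases hy : ∀ i, ∃ t, y (i, t) ∈ F u
      · have hg : Good (x, y) := ⟨u, hu, hy⟩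
        rw [if_pos hg, mul_one]
        refine le_add_of_nonneg_right (Finset.sum_nonneg fun i _ => ?_)
        split_ifs <;> simp [hw0]
      · push Not at hy
        obtain ⟨i, hi⟩ := hy
        refine le_add_of_nonneg_of_le (by split_ifs <;> simp [hw0]) ?_
        refine le_trans (le_of_eq ?_) (Finset.single_le_sum
          (f := fun i : Fin m => w y * (if ∀ t, y (i, t) ∉ F u then 1 else 0)) (fun i _ => ?_) (Finset.mem_univ i))
        · rw [if_pos hi, mul_one]
        · split_ifs <;> simp [hw0]
    have h3 := Finset.sum_le_sum fun y (_ : y ∈ Finset.univ) => h2 y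
    rw [hw1, Finset.sum_add_distrib, Finset.sum_comm (s := Finset.univ) (t := Finset.univ)] at h3
    have h4 : ∑ i : Fin m, ∑ y, w y * (if ∀ t, y (i, t) ∉ F u then 1 else 0) ≤ 1 / 2 := by
      refine le_trans (le_of_eq ?_) (hq u)
      rw [Finset.sum_congr rfl fun i _ => miss_sum p h0 h1 m s (F u) i]
      simp
    linarith
  have hlow2 : (1:ℝ) / 2 ≤ ∑ z : (Fin m × Fin s → V) × (Fin m × Fin s → V),
      ((∏ j, p (z.1 j)) * ∏ j, p (z.2 j)) * (if Good z then 1 else 0) := by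
    rw [Fintype.sum_prod_type]
    calc (1:ℝ)/2 = ∑ x, w x * (1/2) := by rw [← Finset.sum_mul, hw1, one_mul]
      _ ≤ ∑ x, w x * ∑ y, w y * (if Good (x, y) then 1 else 0) :=
        Finset.sum_le_sum fun x _ => mul_le_mul_of_nonneg_left (hlow x) (hw0 x)
      _ = _ := by
        refine Finset.sum_congr rfl fun x _ => ?_
        rw [Finset.mul_sum]
        refine Finset.sum_congr rfl fun y _ => ?_
        rw [← mul_assoc]
  let sw : (Fin m → Bool) → (Fin m × Fin s → V) × (Fin m × Fin s → V) →
    (Fin m × Fin s → V) × (Fin m × Fin s → V) := fun σ z =>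
    (fun j => if σ j.1 then z.2 j else z.1 j, fun j => if σ j.1 then z.1 j else z.2 j)
  have hcount : ∀ z, ((Finset.univ.filter fun σ => Good (sw σ z)).card) ≤ (d+1) * (2 * (m * (K * m))) ^ d := by
    intro z
    by_cases hms : m * s = 0
    · have hm0 : m = 0 := by
        rcases Nat.mul_eq_zero.1 hms with h | h
        · exact h
        · rcases Nat.mul_eq_zero.1 h with h | h
          · rw [h] at hK; simp at hK; linarith
          · exact h
      omega
    have hms' : 0 < m * s := Nat.pos_of_ne_zero hms
    have : Nonempty (Bool × (Fin m × Fin s)) := by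
      have h1 : 0 < m := Nat.pos_of_mul_pos_right hms'
      have h2 : 0 < s := Nat.pos_of_mul_pos_left hms'
      exact ⟨(true, ⟨0, h1⟩, ⟨0, h2⟩)⟩
    let pt : Bool × (Fin m × Fin s) → V := fun q => if q.1 then z.2 q.2 else z.1 q.2
    have hex : ∀ σ, ∃ u, Good (sw σ z) → (∀ j, (sw σ z).1 j ∉ F u) ∧ ∀ i, ∃ t, (sw σ z).2 (i, t) ∈ F u := by
      intro σ
      by_cases h : Good (sw σ z)
      · obtain ⟨u, hu⟩ := h
        exact ⟨u, fun _ => hu⟩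
      · obtain ⟨u, -⟩ := hmiss z.1
        exact ⟨u, fun h' => absurd h' h⟩
    choose U hU using hex
    let tr : (Fin m → Bool) → Finset (Bool × (Fin m × Fin s)) := fun σ =>
      Finset.univ.filter fun q => pt q ∈ F (U σ)
    have hinj : Set.InjOn tr (Finset.univ.filter fun σ => Good (sw σ z) : Finset _) := by
      have hdet : ∀ σ, Good (sw σ z) → ∀ i, σ i = false ↔ ∃ t, (true, (i, t)) ∈ tr σ := by
        intro σ hσ i
        obtain ⟨h1, h2⟩ := hU σ hσ
        constructor
        · intro hi
          obtain ⟨t, ht⟩ := h2 i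
          exact ⟨t, by simpa [tr, pt, sw, hi] using ht⟩
        · rintro ⟨t, ht⟩
          by_contra hi
          have hi : σ i = true := by simpa using hi
          have := h1 (i, t)
          simp only [sw, hi, if_true] at this
          simp [tr, pt] at ht
          exact this ht
      intro σ hσ σ' hσ' heq
      have hσ : Good (sw σ z) := by simpa using hσ
      have hσ' : Good (sw σ' z) := by simpa using hσ'
      funext i
      have e1 := hdet σ hσ i
      have e2 := hdet σ' hσ' i
      rw [heq, ← e2] at e1
      cases h : σ i <;> cases h' : σ' i <;> simp_all
    rw [← Finset.card_image_of_injOn hinj]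
    refine (trace_card F d hF pt _ ?_).trans (le_of_eq ?_)
    · intro t ht
      obtain ⟨σ, -, rfl⟩ := Finset.mem_image.1 ht
      exact ⟨U σ, fun q => by simp [tr]⟩
    · simp [s]
  have hup : ∑ σ : Fin m → Bool, ∑ z : (Fin m × Fin s → V) × (Fin m × Fin s → V),
      ((∏ j, p (z.1 j)) * ∏ j, p (z.2 j)) * (if Good (sw σ z) then 1 else 0) ≤
      ((d+1) * (2 * (m * (K * m))) ^ d : ℕ) := by
    rw [Finset.sum_comm]
    have hone : ∑ z : (Fin m × Fin s → V) × (Fin m × Fin s → V), ((∏ j, p (z.1 j)) * ∏ j, p (z.2 j)) = 1 := by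
      rw [Fintype.sum_prod_type]
      change ∑ x, ∑ y, w x * w y = 1
      simp only [← Finset.mul_sum, hw1, mul_one]
    have hbd : ∑ z : (Fin m × Fin s → V) × (Fin m × Fin s → V), ((∏ j, p (z.1 j)) * ∏ j, p (z.2 j)) *
        (((d+1) * (2 * (m * (K * m))) ^ d : ℕ) : ℝ) = (((d+1) * (2 * (m * (K * m))) ^ d : ℕ) : ℝ) := by
      rw [← Finset.sum_mul, hone, one_mul]
    refine le_trans ?_ hbd.le
    refine Finset.sum_le_sum fun z _ => ?_
    rw [← Finset.mul_sum]
    refine mul_le_mul_of_nonneg_left ?_ (mul_nonneg (hw0 z.1) (hw0 z.2))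
    rw [Finset.sum_boole]
    exact_mod_cast hcount z
  have heq : ∀ σ, ∑ z : (Fin m × Fin s → V) × (Fin m × Fin s → V),
      ((∏ j, p (z.1 j)) * ∏ j, p (z.2 j)) * (if Good (sw σ z) then 1 else 0) =
      ∑ z : (Fin m × Fin s → V) × (Fin m × Fin s → V),
      ((∏ j, p (z.1 j)) * ∏ j, p (z.2 j)) * (if Good z then 1 else 0) :=
    fun σ => (swap_sum p m s σ (fun z => if Good z then 1 else 0)).symm
  rw [Finset.sum_congr rfl fun σ _ => heq σ, Finset.sum_const, Finset.card_univ, nsmul_eq_mul] at hup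
  have hm' : (2:ℝ) * ((d+1) * (2 * (m * (K * m))) ^ d : ℕ) < 2 ^ m := by exact_mod_cast hm
  have hcard : ((Fintype.card (Fin m → Bool) : ℕ) : ℝ) = 2 ^ m := by simp
  rw [hcard] at hup
  have hpos : (0:ℝ) < 2 ^ m := by positivity
  nlinarith

end EP
namespace EP

lemma edist_univ {V : Type*} (G : SimpleGraph V) (u v : V) :
    (G.induce Set.univ).edist ⟨u, trivial⟩ ⟨v, trivial⟩ = G.edist u v := by
  apply le_antisymm
  · by_cases h : G.Reachable u v
    · obtain ⟨w, hw⟩ := h.exists_walk_length_eq_edist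
      let φ : G →g G.induce Set.univ := ⟨fun x => ⟨x, trivial⟩, fun h => h⟩
      rw [← hw, ← Walk.length_map φ w]
      exact edist_le (w.map φ)
    · rw [edist_eq_top_of_not_reachable h]; exact le_top
  · by_cases h : (G.induce Set.univ).Reachable ⟨u, trivial⟩ ⟨v, trivial⟩
    · obtain ⟨w, hw⟩ := h.exists_walk_length_eq_edist
      let φ : G.induce Set.univ →g G := ⟨fun x => x.1, fun h => h⟩
      rw [← hw, ← Walk.length_map φ w]
      exact edist_le (w.map φ)
    · rw [edist_eq_top_of_not_reachable h]; exact le_top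

lemma vc_univ {V : Type*} (G : SimpleGraph V) (d ℓ : ℕ) (h : distVCdimLE G d)
    (X : Finset V) (hX : ∀ Y ⊆ X, ∃ v, ∀ w ∈ X, w ∈ gball G v ℓ ↔ w ∈ Y) : X.card ≤ d := by
  classical
  have h2 := h Set.univ {x | x.1 ∈ X} (by
    intro Y hY
    obtain ⟨v, hv⟩ := hX (X.filter fun w => (⟨w, trivial⟩ : (Set.univ : Set V)) ∈ Y)
      (Finset.filter_subset _ _)
    refine ⟨⟨v, trivial⟩, ℓ, ?_⟩
    ext ⟨w, hw⟩
    have key : (⟨w, hw⟩ : (Set.univ : Set V)) ∈ gball (G.induce Set.univ) ⟨v, trivial⟩ ℓ ↔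
        w ∈ gball G v ℓ := by
      unfold gball
      rw [Set.mem_ofPred_eq, Set.mem_ofPred_eq, edist_univ]
    constructor
    · rintro ⟨h1, h2⟩
      exact (Finset.mem_filter.1 ((hv w h2).1 (key.1 h1))).2
    · intro h1
      have h2 : w ∈ X := hY h1
      exact ⟨key.2 ((hv w h2).2 (Finset.mem_filter.2 ⟨h2, h1⟩)), h2⟩)
  have h3 : (X : Set V) = Subtype.val '' ({x | x.1 ∈ X} : Set (Set.univ : Set V)) := by
    ext w; simp
  rw [← Set.ncard_coe_finset, h3, Set.ncard_image_of_injective _ Subtype.val_injective]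
  exact h2

theorem main (ν d : ℕ) : ∃ N : ℕ, ∀ (ℓ : ℕ) (V : Type) (_ : Fintype V) (G : SimpleGraph V),
    packingNumber G ℓ = ν → distVCdimLE G d → transversality G ℓ ≤ N := by
  classical
  obtain ⟨β, hβ, hfrac⟩ := frac ν d
  obtain ⟨N, hN⟩ := net β hβ d
  refine ⟨N, fun ℓ V _ G hν hd => ?_⟩
  have hpack : ∀ C : Finset V, (C : Set V).Pairwise
      (fun u w => Disjoint (gball G u ℓ) (gball G w ℓ)) → C.card ≤ ν := by
    intro C hC
    rw [← hν]
    refine le_csSup ⟨Fintype.card V, ?_⟩ ⟨C, rfl, hC⟩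
    rintro _ ⟨D, rfl, -⟩
    exact Finset.card_le_univ D
  have htr : ∀ T : Finset V, (∀ v : V, ∃ t ∈ T, t ∈ gball G v ℓ) → transversality G ℓ ≤ T.card :=
    fun T hT => Nat.sInf_le ⟨T, rfl, hT⟩
  rcases isEmpty_or_nonempty V with hV | hV
  · exact (htr ∅ fun v => hV.elim v).trans (by simp)
  obtain ⟨p, hp0, hp1, hp⟩ := dual (fun u v => if v ∈ gball G u ℓ then (1:ℝ) else 0) β (by
    intro c hc0 hc1
    obtain ⟨v, hv⟩ := hfrac ℓ V _ G hpack hd c hc0 hc1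
    refine ⟨v, ?_⟩
    simpa only [ite_mul, one_mul, zero_mul] using hv)
  simp only [ite_mul, one_mul, zero_mul] at hp
  obtain ⟨T, hT, hT2⟩ := hN V _ (fun v => gball G v ℓ) (fun X hX => vc_univ G d ℓ hd X hX) p hp0 hp1 hp
  exact (htr T hT2).trans hT

end EP

theorem stmt0 :
    ∃ f : ℕ → ℕ → ℕ, ∀ (ℓ d : ℕ) (V : Type) (_ : Fintype V) (G : SimpleGraph V),
      distVCdimLE G d → transversality G ℓ ≤ f (packingNumber G ℓ) d := by
  choose f hf using EP.main
  exact ⟨f, fun ℓ d V _ G hd => hf _ d ℓ V _ G rfl hd⟩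
end

section
/- Let d be an integer. For every graph G of distance 2VC-dimension at most d and every integer ℓ ≥ 0, τ_ℓ ≤ 11 · d² · (d + ν_ℓ + 3) · C(d+ν_ℓ, d)², where C(·,·) denotes the binomial coefficient. -/
open SimpleGraph

/-- `X` is 2-shattered by the B-hypergraph of `G`: every subset of `X` of size 2 is the
trace of some ball (of some center and some radius) on `X`. -/
def B2Shattered {V : Type*} (G : SimpleGraph V) (X : Set V) : Prop :=
  ∀ Y ⊆ X, Y.ncard = 2 → ∃ (v : V) (k : ℕ), gball G v k ∩ X = Y

/-- The distance 2VC-dimension of `G` is at most `d`: in every induced subgraph,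
every 2-shattered set has size at most `d`. -/
def dist2VCdimLE {V : Type*} (G : SimpleGraph V) (d : ℕ) : Prop :=
  ∀ (S : Set V) (X : Set S), B2Shattered (G.induce S) X → X.ncard ≤ d

theorem aux_ramsey {α : Type*} (r : α → α → Prop) (hs : ∀ a b, r a b → r b a) :
    ∀ (s t : ℕ) (S : Finset α), (s + t).choose s ≤ S.card →
      (∃ Q ⊆ S, Q.card = s + 1 ∧ (Q : Set α).Pairwise r) ∨
      (∃ Q ⊆ S, Q.card = t + 1 ∧ (Q : Set α).Pairwise fun a b => ¬ r a b) := by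
  classical
  intro s
  induction s with
  | zero =>
    intro t S hS
    left
    have : 0 < S.card := by simpa using hS
    obtain ⟨a, ha⟩ := Finset.card_pos.mp this
    exact ⟨{a}, by simpa using ha, by simp, by simp⟩
  | succ s ihs =>
    intro t
    induction t with
    | zero =>
      intro S hS
      right
      have : 0 < S.card := by simp at hS; simpa using hS
      obtain ⟨a, ha⟩ := Finset.card_pos.mp this
      exact ⟨{a}, by simpa using ha, by simp, by simp⟩
    | succ t iht =>
      intro S hS
      have hch : (s + 1 + (t + 1)).choose (s + 1)
          = (s + (t + 1)).choose s + (s + 1 + t).choose (s + 1) := by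
        have : s + 1 + (t + 1) = (s + 1 + t) + 1 := by ring
        rw [this, Nat.choose_succ_succ]
        congr 2
        ring
      have hp1 : 0 < (s + (t + 1)).choose s := Nat.choose_pos (by omega)
      have hp : 0 < S.card := by omega
      obtain ⟨a, ha⟩ := Finset.card_pos.mp hp
      have hsum := Finset.card_filter_add_card_filter_not (s := S.erase a) (fun b => r a b)
      rw [Finset.card_erase_of_mem ha] at hsum
      by_cases hA : (s + (t + 1)).choose s ≤ ((S.erase a).filter (fun b => r a b)).card
      · rcases ihs (t + 1) _ hA with ⟨Q, hQ, hc, hp⟩ | ⟨Q, hQ, hc, hp⟩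
        · left
          have hna : a ∉ Q := fun h => by have := hQ h; simp at this
          refine ⟨insert a Q, ?_, by rw [Finset.card_insert_of_notMem hna, hc], ?_⟩
          · intro b hb
            rcases Finset.mem_insert.mp hb with rfl | hb
            · exact ha
            · have := hQ hb
              simp at this
              exact this.1.2
          · rw [Finset.coe_insert]
            refine hp.insert ?_
            intro b hb _
            have := hQ hb
            simp at this
            exact ⟨this.2, hs _ _ this.2⟩
        · right
          exact ⟨Q, hQ.trans ((Finset.filter_subset _ _).trans (Finset.erase_subset _ _)), hc, hp⟩
      · have hB : (s + 1 + t).choose (s + 1) ≤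
            ((S.erase a).filter (fun b => ¬ r a b)).card := by omega
        rcases iht _ hB with ⟨Q, hQ, hc, hp⟩ | ⟨Q, hQ, hc, hp⟩
        · left
          exact ⟨Q, hQ.trans ((Finset.filter_subset _ _).trans (Finset.erase_subset _ _)), hc, hp⟩
        · right
          have hna : a ∉ Q := fun h => by have := hQ h; simp at this
          refine ⟨insert a Q, ?_, by rw [Finset.card_insert_of_notMem hna, hc], ?_⟩
          · intro b hb
            rcases Finset.mem_insert.mp hb with rfl | hb
            · exact ha
            · have := hQ hb
              simp at this
              exact this.1.2
          · rw [Finset.coe_insert]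
            refine hp.insert ?_
            intro b hb _
            have := hQ hb
            simp at this
            exact ⟨this.2, fun h => this.2 (hs _ _ h)⟩

theorem aux_minimax {V : Type*} [Fintype V] [Nonempty V] (M : V → V → ℝ) (ε : ℝ) :
    (∃ w : V → ℝ, (∀ v, 0 ≤ w v) ∧ ∑ v, w v = 1 ∧ ∀ c, ε ≤ ∑ v, w v * M v c) ∨
    (∃ μ : V → ℝ, (∀ v, 0 ≤ μ v) ∧ ∑ v, μ v = 1 ∧ ∀ v, ∑ c, μ c * M v c ≤ ε) := by
  classical
  by_contra hcon
  push Not at hcon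
  obtain ⟨h1, h2⟩ := hcon
  let L : (V → ℝ) →ₗ[ℝ] (V → ℝ) :=
    { toFun := fun μ v => ∑ c, μ c * M v c
      map_add' := by
        intro x y; ext v; simp [add_mul, Finset.sum_add_distrib]
      map_smul' := by
        intro r x; ext v; simp [mul_assoc, Finset.mul_sum] }
  have hLc : Continuous L := L.continuous_of_finiteDimensional
  let s : Set (V → ℝ) := L '' stdSimplex ℝ V
  let t : Set (V → ℝ) := {z | ∀ v, z v ≤ ε}
  have hs1 : Convex ℝ s := (convex_stdSimplex ℝ V).linear_image L
  have hs2 : IsCompact s := (isCompact_stdSimplex ℝ V).image hLc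
  have ht1 : Convex ℝ t := by
    intro x hx y hy a b ha hb hab v
    have := hx v
    have := hy v
    simp only [Pi.add_apply, Pi.smul_apply, smul_eq_mul]
    calc a * x v + b * y v ≤ a * ε + b * ε := by gcongr
      _ = ε := by rw [← add_mul, hab, one_mul]
  have ht2 : IsClosed t := by
    have : t = ⋂ v, {z : V → ℝ | z v ≤ ε} := by ext; simp [t]
    rw [this]
    exact isClosed_iInter fun v => isClosed_le (continuous_apply v) continuous_const
  have hd : Disjoint s t := by
    rw [Set.disjoint_left]
    rintro _ ⟨μ, hμ, rfl⟩ ht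
    obtain ⟨v, hv⟩ := h2 μ hμ.1 hμ.2
    exact absurd (ht v) (not_le.mpr hv)
  obtain ⟨f, u, u', hfs, huu, hft⟩ := geometric_hahn_banach_compact_closed hs1 hs2 ht1 ht2 hd
  have hexp : ∀ z : V → ℝ, f z = ∑ v, z v * f (Pi.single v 1) := by
    intro z
    conv_lhs => rw [pi_eq_sum_univ' z]
    simp [map_sum]
  have hneg : ∀ v, f (Pi.single v 1) ≤ 0 := by
    intro v
    by_contra hpos
    push Not at hpos
    set p := f (Pi.single v 1) with hp
    set q := f (fun _ => ε) with hq
    have hb : (fun _ : V => ε) - (max 0 ((q - u') / p)) • (Pi.single v 1 : V → ℝ) ∈ t := by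
      intro x
      have h0 : (0:ℝ) ≤ (Pi.single v (1:ℝ) : V → ℝ) x := by
        rw [Pi.single_apply]; split_ifs <;> norm_num
      have : 0 ≤ (max 0 ((q - u') / p)) * (Pi.single v (1:ℝ) : V → ℝ) x :=
        mul_nonneg (le_max_left _ _) h0
      simp only [Pi.sub_apply, Pi.smul_apply, smul_eq_mul]
      linarith
    have := hft _ hb
    rw [map_sub, map_smul, smul_eq_mul, ← hp, ← hq] at this
    have h3 : (q - u') / p * p ≤ (max 0 ((q - u') / p)) * p :=
      mul_le_mul_of_nonneg_right (le_max_right _ _) hpos.le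
    rw [div_mul_cancel₀ _ hpos.ne'] at h3
    linarith
  set g : V → ℝ := fun v => - f (Pi.single v 1) with hg
  have hg0 : ∀ v, 0 ≤ g v := fun v => by simp [hg]; exact hneg v
  have hkey : ∀ c, ε * ∑ v, g v < ∑ v, g v * M v c := by
    intro c
    have e1 : f (fun v => M v c) < u := by
      apply hfs
      refine ⟨Pi.single c 1, single_mem_stdSimplex ℝ c, ?_⟩
      ext v
      simp [L, Pi.single_apply]
    have e2 : u' < f (fun _ => ε) := hft _ (fun v => le_rfl)
    rw [hexp] at e1 e2
    have e3 : ∑ v, g v * M v c = - ∑ v, M v c * f (Pi.single v 1) := by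
      rw [← Finset.sum_neg_distrib]
      exact Finset.sum_congr rfl fun v _ => by simp [hg]; ring
    have e4 : ε * ∑ v, g v = - ∑ v, ε * f (Pi.single v 1) := by
      rw [Finset.mul_sum, ← Finset.sum_neg_distrib]
      exact Finset.sum_congr rfl fun v _ => by simp [hg]
    rw [e3, e4]
    linarith
  have hG0 : 0 ≤ ∑ v, g v := Finset.sum_nonneg fun v _ => hg0 v
  rcases hG0.eq_or_lt with hG | hG
  · have hz : ∀ v, g v = 0 := by
      intro v
      exact (Finset.sum_eq_zero_iff_of_nonneg (fun v _ => hg0 v)).mp hG.symm v (Finset.mem_univ v)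
    obtain ⟨c⟩ := ‹Nonempty V›
    have := hkey c
    simp [hz] at this
  · obtain ⟨c, hc⟩ := h1 (fun v => g v / ∑ v, g v) (fun v => div_nonneg (hg0 v) hG0)
      (by rw [← Finset.sum_div, div_self hG.ne'])
    have := hkey c
    have e : ∑ v, g v / (∑ v, g v) * M v c = (∑ v, g v * M v c) / ∑ v, g v := by
      rw [Finset.sum_div]
      exact Finset.sum_congr rfl fun v _ => by ring
    rw [e, div_lt_iff₀ hG] at hc
    linarith

theorem aux_vc {V ι : Type*} [Fintype V] [Fintype ι] [DecidableEq ι] (R : V → V → Prop)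
    [∀ a b, Decidable (R a b)]
    (d : ℕ) (hd : 2 ≤ d)
    (hH : ∀ c : Fin (d + 1) → V, Function.Injective c →
      ¬ ∀ i j, i ≠ j → ∃ v, ∀ m, R v (c m) ↔ (m = i ∨ m = j))
    (z : ι → V) :
    (Finset.univ.image (fun c : V => Finset.univ.filter (fun i : ι => R (z i) c))).card ≤
      (Fintype.card ι + 1) ^ ((d + 1).choose 2 - 1) := by
  classical
  set 𝒜 := Finset.univ.image (fun c : V => Finset.univ.filter (fun i : ι => R (z i) c)) with h𝒜
  have hvc : 𝒜.vcDim ≤ (d + 1).choose 2 - 1 := by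
    refine Finset.sup_le ?_
    intro I hI
    rw [Finset.mem_shatterer] at hI
    by_contra hlt
    have hle : (d + 1).choose 2 ≤ I.card := by omega
    have hcard : Fintype.card {s // s ∈ Finset.powersetCard 2 (Finset.univ : Finset (Fin (d+1)))}
        ≤ Fintype.card I := by
      simpa using hle
    obtain ⟨p⟩ := Function.Embedding.nonempty_of_card_le hcard
    have hex : ∀ m : Fin (d+1), ∃ c : V, ∀ s, (R (z (p s)) c ↔ m ∈ s.1) := by
      intro m
      obtain ⟨u, hu, hiu⟩ := hI (t := (Finset.univ.filter (fun s => m ∈ s.1)).image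
        (fun s => (p s : ι))) (by
          intro x hx
          simp only [Finset.mem_image] at hx
          obtain ⟨s, _, rfl⟩ := hx
          exact (p s).2)
      rw [h𝒜, Finset.mem_image] at hu
      obtain ⟨c, _, rfl⟩ := hu
      refine ⟨c, fun s => ?_⟩
      have h1 := Finset.ext_iff.mp hiu (p s)
      simp only [Finset.mem_inter, (p s).2, true_and, Finset.mem_filter, Finset.mem_univ,
        Finset.mem_image] at h1
      rw [h1]
      constructor
      · rintro ⟨s', hs', he⟩
        have : s' = s := p.injective (Subtype.ext he)
        exact this ▸ hs'
      · intro h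
        exact ⟨s, h, rfl⟩
    choose c hc using hex
    have hpr : ∀ i j, i ≠ j → ∃ v, ∀ m, R v (c m) ↔ (m = i ∨ m = j) := by
      intro i j hij
      refine ⟨z (p ⟨{i, j}, by simp [Finset.mem_powersetCard, Finset.card_pair hij]⟩), ?_⟩
      intro m
      rw [hc]
      simp
    refine hH c ?_ hpr
    intro i j hij
    by_contra hne
    obtain ⟨m, hm⟩ : ∃ m : Fin (d+1), m ∉ ({i, j} : Finset (Fin (d+1))) := by
      by_contra hall
      push Not at hall
      have h1 : (Finset.univ : Finset (Fin (d+1))).card ≤ ({i, j} : Finset (Fin (d+1))).card :=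
        Finset.card_le_card fun x _ => hall x
      have h2 : ({i, j} : Finset (Fin (d+1))).card ≤ 2 := Finset.card_le_two
      simp at h1
      omega
    simp at hm
    obtain ⟨v, hv⟩ := hpr i m (Ne.symm hm.1)
    have h1 := (hv i).mpr (Or.inl rfl)
    rw [hij, hv] at h1
    rcases h1 with h | h
    · exact hne h.symm
    · exact hm.2 h.symm
  calc 𝒜.card ≤ 𝒜.shatterer.card := Finset.card_le_card_shatterer _
    _ ≤ ∑ k ∈ Finset.Iic 𝒜.vcDim, (Fintype.card ι).choose k := Finset.card_shatterer_le_sum_vcDim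
    _ ≤ ∑ k ∈ Finset.Iic ((d + 1).choose 2 - 1), (Fintype.card ι).choose k :=
        Finset.sum_le_sum_of_subset (Finset.Iic_subset_Iic.mpr hvc)
    _ ≤ ∑ k ∈ Finset.range ((d + 1).choose 2 - 1 + 1),
          (Fintype.card ι) ^ k * 1 ^ ((d + 1).choose 2 - 1 - k) * ((d + 1).choose 2 - 1).choose k := by
        have : Finset.Iic ((d + 1).choose 2 - 1) = Finset.range ((d + 1).choose 2 - 1 + 1) := by
          ext; simp
        rw [this]
        refine Finset.sum_le_sum fun k hk => ?_
        have h1 : 1 ≤ ((d + 1).choose 2 - 1).choose k :=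
          Nat.choose_pos (by simp at hk; omega)
        have h2 : (Fintype.card ι).choose k ≤ (Fintype.card ι) ^ k := Nat.choose_le_pow _ _
        rw [one_pow, mul_one]
        exact h2.trans (Nat.le_mul_of_pos_right _ h1)
    _ = _ := (add_pow _ _ _).symm

theorem aux_net {V : Type*} [Fintype V] (R : V → V → Prop) [∀ a b, Decidable (R a b)]
    (w : V → ℝ) (hw0 : ∀ v, 0 ≤ w v) (hw1 : ∑ v, w v = 1) (ε : ℝ) (hε : 0 ≤ ε)
    (hw : ∀ c, ε ≤ ∑ v, w v * (if R v c then 1 else 0)) (n B : ℕ)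
    (hB : ∀ z : Fin n × Bool → V,
      (Finset.univ.image (fun c : V => Finset.univ.filter (fun i => R (z i) c))).card ≤ B)
    (hlt : (B : ℝ) < (1 + ε) ^ n) :
    ∃ x : Fin n → V, ∀ c, ∃ i, R (x i) c := by
  classical
  by_contra hcon
  push Not at hcon
  choose c hc using hcon
  let W : (Fin n → V) → ℝ := fun x => ∏ i, w (x i)
  have hW0 : ∀ x, 0 ≤ W x := fun x => Finset.prod_nonneg fun i _ => hw0 _
  have hW1 : ∑ x, W x = 1 := by
    have := Finset.prod_univ_sum (fun _ : Fin n => (Finset.univ : Finset V)) (fun _ v => w v)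
    rw [Fintype.piFinset_univ] at this
    simp only [W]
    rw [← this]
    simp [hw1]
  let g : (Fin n → V) × (Fin n → V) → ℝ := fun q =>
    ∏ i, (if R (q.2 i) (c q.1) then 2 else 1 : ℝ)
  let A : ℝ := ∑ q : (Fin n → V) × (Fin n → V), W q.1 * W q.2 * g q
  have hlow : (1 + ε) ^ n ≤ A := by
    have hx : ∀ x, (1 + ε) ^ n ≤ ∑ y, W y * g (x, y) := by
      intro x
      have e : ∑ y, W y * g (x, y) = ∏ _i : Fin n, ∑ v, w v * (if R v (c x) then 2 else 1 : ℝ) := by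
        rw [Finset.prod_univ_sum, Fintype.piFinset_univ]
        refine Finset.sum_congr rfl fun y _ => ?_
        simp only [W, g, Finset.prod_mul_distrib]
      rw [e, Finset.prod_const, Finset.card_univ, Fintype.card_fin]
      refine pow_le_pow_left₀ (by linarith) ?_ n
      have e2 : ∑ v, w v * (if R v (c x) then 2 else 1 : ℝ)
          = ∑ v, w v + ∑ v, w v * (if R v (c x) then 1 else 0 : ℝ) := by
        rw [← Finset.sum_add_distrib]
        refine Finset.sum_congr rfl fun v _ => ?_
        split_ifs <;> ring
      rw [e2, hw1]
      linarith [hw (c x)]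
    calc (1 + ε) ^ n = ∑ x, W x * (1 + ε) ^ n := by rw [← Finset.sum_mul, hW1, one_mul]
      _ ≤ ∑ x, W x * ∑ y, W y * g (x, y) :=
          Finset.sum_le_sum fun x _ => mul_le_mul_of_nonneg_left (hx x) (hW0 x)
      _ = A := by
          simp only [A, Fintype.sum_prod_type, Finset.mul_sum, mul_assoc]
  let sw : (Fin n → Bool) → (Fin n → V) × (Fin n → V) → (Fin n → V) × (Fin n → V) :=
    fun σ q => (fun i => if σ i then q.2 i else q.1 i, fun i => if σ i then q.1 i else q.2 i)
  have hsw : ∀ σ, Function.Involutive (sw σ) := by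
    intro σ q
    ext i
    · simp only [sw]; split_ifs <;> rfl
    · simp only [sw]; split_ifs <;> rfl
  have hWsw : ∀ σ q, W (sw σ q).1 * W (sw σ q).2 = W q.1 * W q.2 := by
    intro σ q
    simp only [W, ← Finset.prod_mul_distrib]
    refine Finset.prod_congr rfl fun i _ => ?_
    simp only [sw]
    split_ifs
    · exact mul_comm _ _
    · rfl
  have hAσ : ∀ σ, A = ∑ q, W q.1 * W q.2 * g (sw σ q) := by
    intro σ
    have := Equiv.sum_comp (hsw σ).toPerm (fun q => W q.1 * W q.2 * g q)
    simp only [A]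
    rw [← this]
    refine Finset.sum_congr rfl fun q _ => ?_
    simp only [Function.Involutive.coe_toPerm]
    rw [hWsw]
  have hsum : ∀ q, ∑ σ, g (sw σ q) ≤ (B : ℝ) * 2 ^ n := by
    intro q
    let z : Fin n × Bool → V := fun p => if p.2 then q.2 p.1 else q.1 p.1
    let h : Finset (Fin n × Bool) → Fin n → Bool → ℝ := fun T i b =>
      if (i, b) ∈ T then 0 else if (i, !b) ∈ T then 2 else 1
    have hh0 : ∀ T i b, 0 ≤ h T i b := by
      intro T i b; simp only [h]; split_ifs <;> norm_num
    set 𝒜 := Finset.univ.image (fun c : V => Finset.univ.filter (fun i => R (z i) c)) with h𝒜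
    have h1 : ∀ σ, g (sw σ q) ≤ ∑ T ∈ 𝒜, ∏ i, h T i (σ i) := by
      intro σ
      let T := Finset.univ.filter (fun i => R (z i) (c (sw σ q).1))
      have hT : T ∈ 𝒜 := Finset.mem_image_of_mem _ (Finset.mem_univ _)
      have e : g (sw σ q) = ∏ i, h T i (σ i) := by
        refine Finset.prod_congr rfl fun i _ => ?_
        have hn := hc (sw σ q).1 i
        have hz1 : (sw σ q).1 i = z (i, σ i) := rfl
        have hz2 : (sw σ q).2 i = z (i, !σ i) := by
          simp only [sw, z]; cases σ i <;> rfl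
        rw [hz2]
        simp only [h, T, Finset.mem_filter, Finset.mem_univ, true_and]
        rw [hz1] at hn
        rw [if_neg hn]
      rw [e]
      exact Finset.single_le_sum (f := fun T => ∏ i, h T i (σ i))
        (fun T _ => Finset.prod_nonneg fun i _ => hh0 _ _ _) hT
    calc ∑ σ, g (sw σ q) ≤ ∑ σ : Fin n → Bool, ∑ T ∈ 𝒜, ∏ i, h T i (σ i) :=
          Finset.sum_le_sum fun σ _ => h1 σ
      _ = ∑ T ∈ 𝒜, ∑ σ : Fin n → Bool, ∏ i, h T i (σ i) := Finset.sum_comm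
      _ ≤ ∑ T ∈ 𝒜, (2 : ℝ) ^ n := by
          refine Finset.sum_le_sum fun T _ => ?_
          have e := Finset.prod_univ_sum (fun _ : Fin n => (Finset.univ : Finset Bool))
            (fun i b => h T i b)
          rw [Fintype.piFinset_univ] at e
          rw [← e]
          have : ∏ i : Fin n, ∑ b, h T i b ≤ ∏ _i : Fin n, (2 : ℝ) := by
            refine Finset.prod_le_prod (fun i _ => Finset.sum_nonneg fun b _ => hh0 _ _ _) ?_
            intro i _
            simp only [h, Fintype.sum_bool, Bool.not_true, Bool.not_false]
            split_ifs <;> norm_num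
          simpa using this
      _ = (𝒜.card : ℝ) * 2 ^ n := by simp
      _ ≤ (B : ℝ) * 2 ^ n := by
          have : (𝒜.card : ℝ) ≤ B := by exact_mod_cast hB z
          gcongr
  have hup : 2 ^ n * A ≤ 2 ^ n * B := by
    calc (2:ℝ) ^ n * A = ∑ σ : Fin n → Bool, A := by simp
      _ = ∑ σ : Fin n → Bool, ∑ q, W q.1 * W q.2 * g (sw σ q) :=
          Finset.sum_congr rfl fun σ _ => hAσ σ
      _ = ∑ q : (Fin n → V) × (Fin n → V), W q.1 * W q.2 * ∑ σ, g (sw σ q) := by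
          rw [Finset.sum_comm]
          simp only [Finset.mul_sum]
      _ ≤ ∑ q : (Fin n → V) × (Fin n → V), W q.1 * W q.2 * (B * 2 ^ n) :=
          Finset.sum_le_sum fun q _ =>
            mul_le_mul_of_nonneg_left (hsum q) (mul_nonneg (hW0 _) (hW0 _))
      _ = 2 ^ n * B := by
          rw [← Finset.sum_mul, Fintype.sum_prod_type]
          simp only [← Finset.mul_sum, hW1, mul_one]
          ring
  have : A ≤ B := le_of_mul_le_mul_left hup (by positivity)
  linarith

theorem aux_marginal {V : Type*} [Fintype V] (μ : V → ℝ) (h0 : ∀ v, 0 ≤ μ v)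
    (h1 : ∑ v, μ v = 1) (N : ℕ) (m : Fin (N + 1)) (F : (Fin (N + 1) → V) → ℝ) (ε : ℝ)
    (hF : ∀ x : Fin N → V, ∑ a, μ a * F (m.insertNth a x) ≤ ε) :
    ∑ c : Fin (N + 1) → V, (∏ i, μ (c i)) * F c ≤ ε := by
  classical
  have hW1 : ∑ x : Fin N → V, ∏ i, μ (x i) = 1 := by
    have := Finset.prod_univ_sum (fun _ : Fin N => (Finset.univ : Finset V)) (fun _ v => μ v)
    rw [Fintype.piFinset_univ] at this
    rw [← this]
    simp [h1]
  rw [← Equiv.sum_comp (Fin.insertNthEquiv (fun _ => V) m), Fintype.sum_prod_type, Finset.sum_comm]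
  calc _ = ∑ x : Fin N → V, (∏ i, μ (x i)) * ∑ a, μ a * F (m.insertNth a x) := by
        refine Finset.sum_congr rfl fun x _ => ?_
        rw [Finset.mul_sum]
        refine Finset.sum_congr rfl fun a _ => ?_
        simp only [Fin.insertNthEquiv_apply, Fin.prod_univ_succAbove _ m, Fin.insertNth_apply_same,
          Fin.insertNth_apply_succAbove]
        have : (Fin.insertNthEquiv (fun _ => V) m) (a, x) = m.insertNth a x := rfl
        rw [this]
        ring
    _ ≤ ∑ x : Fin N → V, (∏ i, μ (x i)) * ε :=
        Finset.sum_le_sum fun x _ => mul_le_mul_of_nonneg_left (hF x)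
          (Finset.prod_nonneg fun i _ => h0 _)
    _ = ε := by rw [← Finset.sum_mul, hW1, one_mul]

theorem aux_pack {V : Type*} [Fintype V] (R : V → V → Prop) [∀ a b, Decidable (R a b)]
    (hrefl : ∀ v, R v v) (d ν : ℕ) (hd : 2 ≤ d)
    (hH : ∀ c : Fin (d + 1) → V, Function.Injective c →
      ¬ ∀ i j, i ≠ j → ∃ v, ∀ m, R v (c m) ↔ (m = i ∨ m = j))
    (hν : ∀ C : Finset V, ((C : Set V).Pairwise fun a b => ¬ ∃ v, R v a ∧ R v b) → C.card ≤ ν)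
    (μ : V → ℝ) (h0 : ∀ v, 0 ≤ μ v) (h1 : ∑ v, μ v = 1)
    (hμ : ∀ v, ∑ c, μ c * (if R v c then 1 else 0) ≤
      1 / (4 * ((d + ν).choose d : ℝ) ^ 2)) : False := by
  classical
  set k := (d + ν).choose d with hk
  have hkpos : 0 < k := Nat.choose_pos (by omega)
  have hne : Nonempty V := by
    by_contra h
    rw [not_nonempty_iff] at h
    simp at h1
  obtain ⟨N, hN⟩ : ∃ N, N + 1 = 2 * k := ⟨2 * k - 1, by omega⟩
  have hf : ∀ a b : V, ∃ v, (∃ v, R v a ∧ R v b) → R v a ∧ R v b := by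
    intro a b
    by_cases h : ∃ v, R v a ∧ R v b
    · obtain ⟨v, hv⟩ := h
      exact ⟨v, fun _ => hv⟩
    · exact ⟨hne.some, fun h' => absurd h' h⟩
  choose f hf using hf
  let bad : (Fin (N+1) → V) → Fin (N+1) → Prop := fun c m =>
    ∃ j, ∃ i ∈ Finset.Iio j, m ≠ i ∧ m ≠ j ∧ R (f (c i) (c j)) (c m)
  let ind : (Fin (N+1) → V) → Fin (N+1) → Fin (N+1) → Fin (N+1) → ℝ := fun c m j i =>
    if m ≠ i ∧ m ≠ j ∧ R (f (c i) (c j)) (c m) then 1 else 0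
  have hind0 : ∀ c m j i, 0 ≤ ind c m j i := by
    intro c m j i; simp only [ind]; split_ifs <;> norm_num
  have hbadle : ∀ c, ((Finset.univ.filter (bad c)).card : ℝ) ≤
      ∑ m, ∑ j, ∑ i ∈ Finset.Iio j, ind c m j i := by
    intro c
    rw [Finset.card_filter, Nat.cast_sum]
    refine Finset.sum_le_sum fun m _ => ?_
    by_cases hb : bad c m
    · rw [if_pos hb]
      obtain ⟨j, i, hi, h⟩ := hb
      have e : ind c m j i = 1 := if_pos h
      calc ((1:ℕ):ℝ) = ind c m j i := by rw [e]; norm_num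
        _ ≤ ∑ i ∈ Finset.Iio j, ind c m j i :=
            Finset.single_le_sum (f := fun i => ind c m j i) (fun i _ => hind0 _ _ _ _) hi
        _ ≤ _ := Finset.single_le_sum (f := fun j => ∑ i ∈ Finset.Iio j, ind c m j i)
            (fun j _ => Finset.sum_nonneg fun i _ => hind0 _ _ _ _) (Finset.mem_univ j)
    · rw [if_neg hb]
      simpa using Finset.sum_nonneg fun j _ => Finset.sum_nonneg fun i _ => hind0 c m j i
  set ε : ℝ := 1 / (4 * (k : ℝ) ^ 2) with hε
  have hε0 : 0 < ε := by positivity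
  have hone : ∀ m j i, ∑ c : Fin (N+1) → V, (∏ l, μ (c l)) * ind c m j i ≤ ε := by
    intro m j i
    apply aux_marginal μ h0 h1 N m (fun c => ind c m j i)
    intro x
    by_cases hmi : m = i
    · simp [ind, hmi, hε0.le]
    by_cases hmj : m = j
    · simp [ind, hmj, hε0.le]
    obtain ⟨i', rfl⟩ := Fin.exists_succAbove_eq (Ne.symm hmi)
    obtain ⟨j', rfl⟩ := Fin.exists_succAbove_eq (Ne.symm hmj)
    simp only [ind, Fin.insertNth_apply_same, Fin.insertNth_apply_succAbove]
    refine le_trans (Finset.sum_le_sum fun a _ => ?_) (hμ (f (x i') (x j')))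
    refine mul_le_mul_of_nonneg_left ?_ (h0 a)
    split_ifs <;> simp_all
  have hcount : (∑ m : Fin (N+1), ∑ j : Fin (N+1), ∑ i ∈ Finset.Iio j, ε) < k := by
    have e : ∑ j : Fin (N+1), ((j : ℕ) : ℝ) = (N + 1) * N / 2 := by
      have h2 := Finset.sum_range_id_mul_two (N+1)
      rw [← Fin.sum_univ_eq_sum_range (fun i => i)] at h2
      have h3 : (∑ j : Fin (N+1), ((j : ℕ) : ℝ)) * 2 = (N + 1) * N := by
        have : ((∑ j : Fin (N+1), (j : ℕ) : ℕ) : ℝ) * 2 = (((N + 1) * (N + 1 - 1) : ℕ) : ℝ) := by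
          exact_mod_cast h2
        simpa using this
      linarith
    simp only [Finset.sum_const, Fin.card_Iio, nsmul_eq_mul, ← Finset.sum_mul, e,
      Finset.card_univ, Fintype.card_fin]
    have hN' : (N : ℝ) = 2 * k - 1 := by
      have : (N : ℝ) + 1 = 2 * k := by exact_mod_cast hN
      linarith
    have hk' : (0:ℝ) < k := by exact_mod_cast hkpos
    push_cast
    rw [hN', hε]
    field_simp
    ring_nf
    nlinarith
  have hW1 : ∑ x : Fin (N+1) → V, ∏ i, μ (x i) = 1 := by
    have := Finset.prod_univ_sum (fun _ : Fin (N+1) => (Finset.univ : Finset V)) (fun _ v => μ v)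
    rw [Fintype.piFinset_univ] at this
    rw [← this]
    simp [h1]
  obtain ⟨c, hc⟩ : ∃ c, (Finset.univ.filter (bad c)).card < k := by
    by_contra hall
    push Not at hall
    have : (k : ℝ) ≤ ∑ m : Fin (N+1), ∑ j : Fin (N+1), ∑ i ∈ Finset.Iio j, ε := by
      calc (k : ℝ) = ∑ c : Fin (N+1) → V, (∏ l, μ (c l)) * k := by
            rw [← Finset.sum_mul, hW1, one_mul]
        _ ≤ ∑ c : Fin (N+1) → V, (∏ l, μ (c l)) * ∑ m, ∑ j, ∑ i ∈ Finset.Iio j, ind c m j i := by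
            refine Finset.sum_le_sum fun c _ => mul_le_mul_of_nonneg_left ?_
              (Finset.prod_nonneg fun i _ => h0 _)
            refine le_trans ?_ (hbadle c)
            exact_mod_cast hall c
        _ = ∑ m, ∑ j, ∑ i ∈ Finset.Iio j,
              ∑ c : Fin (N+1) → V, (∏ l, μ (c l)) * ind c m j i := by
            simp only [Finset.mul_sum]
            rw [Finset.sum_comm]
            refine Finset.sum_congr rfl fun m _ => ?_
            rw [Finset.sum_comm]
            refine Finset.sum_congr rfl fun j _ => ?_
            rw [Finset.sum_comm]
        _ ≤ _ := Finset.sum_le_sum fun m _ => Finset.sum_le_sum fun j _ =>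
            Finset.sum_le_sum fun i _ => hone m j i
    linarith
  have hS : k ≤ (Finset.univ.filter (fun m => ¬ bad c m)).card := by
    have := Finset.card_filter_add_card_filter_not (s := Finset.univ) (bad c)
    simp only [Finset.card_univ, Fintype.card_fin] at this
    omega
  rcases aux_ramsey (fun i j => ∃ v, R v (c i) ∧ R v (c j))
      (fun i j ⟨v, h⟩ => ⟨v, h.2, h.1⟩) d ν _ hS with ⟨Q, hQ, hcard, hp⟩ | ⟨Q, hQ, hcard, hp⟩
  · have hlt : ∀ i ∈ Q, ∀ j ∈ Q, i < j → ∃ v, R v (c i) ∧ R v (c j) ∧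
        ∀ m ∈ Q, m ≠ i → m ≠ j → ¬ R v (c m) := by
      intro i hi j hj hij
      obtain ⟨e1, e2⟩ := hf (c i) (c j) (hp hi hj hij.ne)
      refine ⟨f (c i) (c j), e1, e2, fun m hm hmi hmj hr => ?_⟩
      have := hQ hm
      simp only [Finset.mem_filter, Finset.mem_univ, true_and] at this
      exact this ⟨j, i, Finset.mem_Iio.mpr hij, hmi, hmj, hr⟩
    have hne' : ∀ i ∈ Q, ∀ j ∈ Q, i ≠ j → ∃ v, R v (c i) ∧ R v (c j) ∧
        ∀ m ∈ Q, m ≠ i → m ≠ j → ¬ R v (c m) := by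
      intro i hi j hj hij
      rcases lt_or_gt_of_ne hij with h | h
      · exact hlt i hi j hj h
      · obtain ⟨v, a, b, h⟩ := hlt j hj i hi h
        exact ⟨v, b, a, fun m hm h1 h2 => h m hm h2 h1⟩
    let e := Q.orderEmbOfFin hcard
    have heQ : ∀ i, e i ∈ Q := fun i => Finset.orderEmbOfFin_mem Q hcard i
    have hpr : ∀ i j, i ≠ j → ∃ v, ∀ m, R v (c (e m)) ↔ (m = i ∨ m = j) := by
      intro i j hij
      obtain ⟨v, a, b, h⟩ := hne' (e i) (heQ i) (e j) (heQ j) (fun h => hij (e.injective h))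
      refine ⟨v, fun m => ⟨fun hr => ?_, ?_⟩⟩
      · by_contra hno
        push Not at hno
        exact h (e m) (heQ m) (fun h => hno.1 (e.injective h)) (fun h => hno.2 (e.injective h)) hr
      · rintro (rfl | rfl) <;> assumption
    refine hH (fun m => c (e m)) ?_ hpr
    intro i j hij
    simp only at hij
    by_contra hne
    obtain ⟨m, hm⟩ : ∃ m : Fin (d+1), m ∉ ({i, j} : Finset (Fin (d+1))) := by
      by_contra hall
      push Not at hall
      have h1 : (Finset.univ : Finset (Fin (d+1))).card ≤ ({i, j} : Finset (Fin (d+1))).card :=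
        Finset.card_le_card fun x _ => hall x
      have h2 : ({i, j} : Finset (Fin (d+1))).card ≤ 2 := Finset.card_le_two
      simp at h1
      omega
    simp at hm
    obtain ⟨v, hv⟩ := hpr i m (Ne.symm hm.1)
    have h1 := (hv i).mpr (Or.inl rfl)
    rw [hij, hv] at h1
    rcases h1 with h | h
    · exact hne h.symm
    · exact hm.2 h.symm
  · have hinj : Set.InjOn c Q := by
      intro i hi j hj hij
      by_contra hne
      exact hp hi hj hne ⟨c i, hrefl _, by rw [← hij]; exact hrefl _⟩
    have := hν (Q.image c) (by
      rw [Finset.coe_image]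
      rintro _ ⟨i, hi, rfl⟩ _ ⟨j, hj, rfl⟩ hij
      exact hp hi hj (fun h => hij (by rw [h])))
    rw [Finset.card_image_of_injOn hinj] at this
    omega

theorem aux_arith (d ν : ℕ) (hd : 2 ≤ d) :
    (2 * (4 * (d + ν).choose d ^ 2 * (2 * d ^ 2 * (d + ν + 3))) + 1) ^ ((d + 1).choose 2 - 1)
      < 2 ^ (2 * d ^ 2 * (d + ν + 3)) := by
  set k := (d + ν).choose d with hk
  obtain ⟨s, hs⟩ : ∃ s, s = d + ν + 3 := ⟨_, rfl⟩
  rw [← hs]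
  have hkle : k * 8 ≤ 2 ^ s := by
    have : k ≤ 2 ^ (d + ν) := Nat.choose_le_two_pow _ _
    rw [hs, pow_add]; omega
  have hcube : ∀ n, (n + 5) ^ 3 ≤ 2 ^ (n + 5) * 4 := by
    intro n
    induction n with
    | zero => norm_num
    | succ n ih =>
      have : (2:ℕ) ^ (n + 1 + 5) = 2 * 2 ^ (n + 5) := by rw [← pow_succ']
      rw [this]
      have h2 : (n + 1 + 5) ^ 3 ≤ 2 * (n + 5) ^ 3 := by
        ring_nf
        nlinarith [sq_nonneg n, Nat.zero_le (n ^ 3)]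
      linarith
  have hs3 : s ^ 3 ≤ 2 ^ s * 4 := by
    obtain ⟨n, rfl⟩ : ∃ n, s = n + 5 := ⟨s - 5, by omega⟩
    exact hcube n
  have hds : d ^ 2 * s ≤ s ^ 3 := by
    have : d ≤ s := by omega
    calc d ^ 2 * s ≤ s ^ 2 * s := by gcongr
      _ = s ^ 3 := by ring
  have hN : 2 * (4 * k ^ 2 * (2 * d ^ 2 * s)) ≤ 2 ^ (3 * s) := by
    calc 2 * (4 * k ^ 2 * (2 * d ^ 2 * s)) = 16 * k ^ 2 * (d ^ 2 * s) := by ring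
      _ ≤ 16 * k ^ 2 * (2 ^ s * 4) := by exact Nat.mul_le_mul_left _ (hds.trans hs3)
      _ = (k * 8) ^ 2 * 2 ^ s := by ring
      _ ≤ (2 ^ s) ^ 2 * 2 ^ s := by gcongr
      _ = 2 ^ (3 * s) := by ring
  have hN1 : 2 * (4 * k ^ 2 * (2 * d ^ 2 * s)) + 1 ≤ 2 ^ (3 * s + 1) := by
    have : 1 ≤ 2 ^ (3 * s) := Nat.one_le_two_pow
    rw [pow_succ 2 (3 * s)]; omega
  have hD : ((d + 1).choose 2 - 1) * 2 + 2 = d * (d + 1) := by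
    have h1 : (d + 1).choose 2 * 2 = (d + 1) * d := by
      rw [Nat.choose_two_right, Nat.div_mul_cancel]
      · rfl
      · exact (Nat.even_mul_pred_self (d + 1)).two_dvd
    have h2 : 6 ≤ (d + 1) * d := by nlinarith
    have h3 : (d + 1) * d = d * (d + 1) := by ring
    omega
  calc _ ≤ (2 ^ (3 * s + 1)) ^ ((d + 1).choose 2 - 1) := Nat.pow_le_pow_left hN1 _
    _ = 2 ^ ((3 * s + 1) * ((d + 1).choose 2 - 1)) := by rw [← pow_mul]
    _ < _ := by
      apply Nat.pow_lt_pow_right (by norm_num)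
      generalize (d + 1).choose 2 - 1 = D at hD
      have h5 : d + 3 ≤ s := by omega
      clear hN1 hN hds hs3 hcube hkle hk hs
      zify at *
      have hD' : (D : ℤ) * 2 = d * (d + 1) - 2 := by linarith
      have : (3 * (s:ℤ) + 1) * (D * 2) < 4 * d ^ 2 * s := by
        rw [hD']
        nlinarith [sq_nonneg ((d:ℤ) - 2), sq_nonneg ((d:ℤ) - 3), mul_nonneg (sub_nonneg.mpr hd) (sub_nonneg.mpr h5), mul_nonneg (sq_nonneg ((d:ℤ) - 2)) (sub_nonneg.mpr h5), mul_nonneg (mul_nonneg (sub_nonneg.mpr hd) (sub_nonneg.mpr hd)) (sub_nonneg.mpr hd)]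
      linarith

theorem aux_main {V : Type*} [Fintype V] [Nonempty V] (R : V → V → Prop)
    (hrefl : ∀ v, R v v) (d ν : ℕ) (hd : 2 ≤ d)
    (hH : ∀ c : Fin (d + 1) → V, Function.Injective c →
      ¬ ∀ i j, i ≠ j → ∃ v, ∀ m, R v (c m) ↔ (m = i ∨ m = j))
    (hν : ∀ C : Finset V, ((C : Set V).Pairwise fun a b => ¬ ∃ v, R v a ∧ R v b) → C.card ≤ ν) :
    ∃ T : Finset V, T.card ≤ 11 * d ^ 2 * (d + ν + 3) * ((d + ν).choose d) ^ 2 ∧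
      ∀ v, ∃ t ∈ T, R t v := by
  classical
  set k := (d + ν).choose d with hk
  have hkpos : 0 < k := Nat.choose_pos (by omega)
  rcases aux_minimax (fun v c => if R v c then (1:ℝ) else 0) (1 / (4 * (k : ℝ) ^ 2)) with
    ⟨w, hw0, hw1, hw⟩ | ⟨μ, hμ0, hμ1, hμ⟩
  · set m := 2 * d ^ 2 * (d + ν + 3) with hm
    set n := 4 * k ^ 2 * m with hn
    obtain ⟨x, hx⟩ := aux_net R w hw0 hw1 (1 / (4 * (k : ℝ) ^ 2)) (by positivity) hw n
      ((2 * n + 1) ^ ((d + 1).choose 2 - 1))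
      (by
        intro z
        have := aux_vc R d hd hH z
        refine this.trans (le_of_eq ?_)
        simp [mul_comm])
      (by
        have h1 : (((2 * n + 1) ^ ((d + 1).choose 2 - 1) : ℕ) : ℝ) < ((2 ^ m : ℕ) : ℝ) := by
          exact_mod_cast aux_arith d ν hd
        refine lt_of_lt_of_le h1 ?_
        rw [hn, pow_mul (1 + 1 / (4 * (k : ℝ) ^ 2)) (4 * k ^ 2) m]
        push_cast
        refine pow_le_pow_left₀ (zero_le_two (α := ℝ)) ?_ m
        have h3 : (0:ℝ) ≤ 1 / (4 * (k : ℝ) ^ 2) := by positivity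
        have h2 := one_add_mul_le_pow (a := 1 / (4 * (k : ℝ) ^ 2)) (by linarith) (4 * k ^ 2)
        have hk' : (k : ℝ) ≠ 0 := by exact_mod_cast hkpos.ne'
        refine le_trans (le_of_eq ?_) h2
        push_cast
        field_simp
        norm_num)
    refine ⟨Finset.univ.image x, ?_, ?_⟩
    · refine Finset.card_image_le.trans ?_
      rw [Finset.card_univ, Fintype.card_fin, hn, hm]
      calc 4 * k ^ 2 * (2 * d ^ 2 * (d + ν + 3)) = 8 * (d ^ 2 * (d + ν + 3) * k ^ 2) := by ring
        _ ≤ 11 * (d ^ 2 * (d + ν + 3) * k ^ 2) := Nat.mul_le_mul_right _ (by norm_num)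
        _ = _ := by ring
    · intro v
      obtain ⟨i, hi⟩ := hx v
      exact ⟨x i, Finset.mem_image_of_mem _ (Finset.mem_univ _), hi⟩
  · exact (aux_pack R hrefl d ν hd hH hν μ hμ0 hμ1 hμ).elim

theorem aux_edist_univ {V : Type*} (G : SimpleGraph V) (u v : (Set.univ : Set V)) :
    (G.induce Set.univ).edist u v = G.edist u.1 v.1 := by
  apply le_antisymm
  · rw [edist_eq_sInf (G := G)]
    refine le_sInf ?_
    rintro _ ⟨p, rfl⟩
    have := Walk.edist_le (p.map (induceUnivIso G).symm.toHom)
    rw [Walk.length_map] at this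
    exact this
  · rw [edist_eq_sInf (G := G.induce Set.univ)]
    refine le_sInf ?_
    rintro _ ⟨p, rfl⟩
    have := Walk.edist_le (p.map (induceUnivIso G).toHom)
    simpa using this

theorem aux_shatter {V : Type*} [Fintype V] (G : SimpleGraph V) (d ℓ : ℕ) (h : dist2VCdimLE G d)
    (n : ℕ) (c : Fin n → V) (hc : Function.Injective c)
    (hp : ∀ i j, i ≠ j → ∃ v, ∀ m, G.edist v (c m) ≤ (ℓ : ℕ∞) ↔ (m = i ∨ m = j)) : n ≤ d := by
  classical
  let X : Set (Set.univ : Set V) := Set.range (fun i => ⟨c i, Set.mem_univ _⟩)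
  have hinj : Function.Injective (fun i => (⟨c i, Set.mem_univ _⟩ : (Set.univ : Set V))) := by
    intro i j hij
    exact hc (congrArg Subtype.val hij)
  have hX : X.ncard = n := by
    have := Set.ncard_image_of_injective Set.univ hinj
    rw [Set.image_univ] at this
    simpa [Set.ncard_univ] using this
  rw [← hX]
  apply h
  intro Y hY hY2
  obtain ⟨a, b, hab, rfl⟩ := Set.ncard_eq_two.mp hY2
  obtain ⟨i, rfl⟩ := hY (Set.mem_insert _ _)
  obtain ⟨j, rfl⟩ := hY (Set.mem_insert_of_mem _ rfl)
  obtain ⟨v, hv⟩ := hp i j (fun e => hab (by rw [e]))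
  refine ⟨⟨v, Set.mem_univ _⟩, ℓ, ?_⟩
  ext y
  simp only [gball, Set.mem_inter_iff, Set.mem_ofPred_eq, Set.mem_insert_iff, Set.mem_singleton_iff,
    aux_edist_univ]
  constructor
  · rintro ⟨h1, m, rfl⟩
    rcases (hv m).mp h1 with rfl | rfl
    · exact Or.inl rfl
    · exact Or.inr rfl
  · rintro (rfl | rfl)
    · exact ⟨(hv i).mpr (Or.inl rfl), i, rfl⟩
    · exact ⟨(hv j).mpr (Or.inr rfl), j, rfl⟩

theorem stmt1 (d : ℕ) {V : Type*} [Fintype V] (G : SimpleGraph V) (ℓ : ℕ)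
    (h : dist2VCdimLE G d) :
    transversality G ℓ ≤
      11 * d ^ 2 * (d + packingNumber G ℓ + 3) * (Nat.choose (d + packingNumber G ℓ) d) ^ 2 := by
  classical
  have hT : ∀ T : Finset V, (∀ v, ∃ t ∈ T, G.edist t v ≤ (ℓ : ℕ∞)) →
      transversality G ℓ ≤ T.card := by
    intro T hT
    refine Nat.sInf_le ⟨T, rfl, fun v => ?_⟩
    obtain ⟨t, ht, h⟩ := hT v
    exact ⟨t, ht, by rw [gball, Set.mem_ofPred_eq, edist_comm]; exact h⟩
  have hν : ∀ C : Finset V, ((C : Set V).Pairwise fun a b =>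
      ¬ ∃ v, G.edist v a ≤ (ℓ : ℕ∞) ∧ G.edist v b ≤ (ℓ : ℕ∞)) → C.card ≤ packingNumber G ℓ := by
    intro C hC
    refine le_csSup ⟨Fintype.card V, ?_⟩ ⟨C, rfl, ?_⟩
    · rintro _ ⟨C, rfl, _⟩
      exact Finset.card_le_univ C
    · intro a ha b hb hab
      rw [Set.disjoint_left]
      intro v hva hvb
      rw [gball, Set.mem_ofPred_eq, edist_comm] at hva hvb
      exact hC ha hb hab ⟨v, hva, hvb⟩
  rcases isEmpty_or_nonempty V with hV | hV
  · exact (hT ∅ (fun v => isEmptyElim v)).trans (by simp)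
  obtain ⟨v0⟩ := id hV
  have hd1 : 1 ≤ d := by
    refine aux_shatter G d ℓ h 1 (fun _ => v0) (fun i j _ => Subsingleton.elim i j) ?_
    intro i j hij
    exact absurd (Subsingleton.elim i j) hij
  rcases hd1.eq_or_lt with hd | hd
  · -- all balls are singletons
    have hsing : ∀ a b : V, G.edist a b ≤ (ℓ : ℕ∞) → a = b := by
      intro a b hab
      by_contra hne
      have := aux_shatter G d ℓ h 2 ![a, b] (by
        intro i j hij
        clear hd
        fin_cases i <;> fin_cases j <;> simp_all) (by
        intro i j hij
        refine ⟨a, fun m => ?_⟩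
        clear hd
        fin_cases i <;> fin_cases j <;> fin_cases m <;> simp_all)
      omega
    have h1 := hν Finset.univ (by
      rintro a _ b _ hab ⟨v, hva, hvb⟩
      exact hab ((hsing _ _ hva).symm.trans (hsing _ _ hvb)))
    have h2 := hT Finset.univ (fun v => ⟨v, Finset.mem_univ _, by simp⟩)
    refine h2.trans (h1.trans ?_)
    rw [← hd]
    generalize packingNumber G ℓ = ν
    simp only [Nat.choose_one_right]
    nlinarith [Nat.zero_le (ν ^ 2), Nat.zero_le (ν ^ 3)]
  · obtain ⟨T, hTc, hT'⟩ := aux_main (fun a b => G.edist a b ≤ (ℓ : ℕ∞)) (by simp) d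
      (packingNumber G ℓ) hd (by
        intro c hc hp
        have := aux_shatter G d ℓ h (d + 1) c hc hp
        omega) hν
    exact (hT T hT').trans hTc
end

section
/- Let T be a tree in which every node has degree 1 or 3, and suppose α > 2 of its leaves are labeled. Then T has an edge e such that each of the two connected components of T − e contains at least α/3 labeled leaves. -/
open SimpleGraph

/-- A property of vertices closed under adjacency propagates along reachability. -/
lemma reach_closed {L : Type*} (G : SimpleGraph L) (P : L → Prop) (v x : L)
    (h0 : P v) (hs : ∀ y z, P y → G.Adj y z → P z) (h : G.Reachable x v) : P x := by
  have h' := (SimpleGraph.reachable_iff_reflTransGen v x).1 h.symm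
  induction h' with
  | refl => exact h0
  | tail _ hyz ih =>
    exact hs _ _ (ih ((SimpleGraph.reachable_iff_reflTransGen _ _).2 (by assumption)).symm) hyz

/-- The vertices on the `v`-side of the edge `uv`. -/
def sideOf {L : Type*} (T : SimpleGraph L) (u v : L) : Set L :=
  {x | (T.deleteEdges {s(u, v)}).Reachable x v}

lemma self_sideOf {L : Type*} (T : SimpleGraph L) (u v : L) : v ∈ sideOf T u v :=
  Reachable.refl _

lemma step_sideOf {L : Type*} (T : SimpleGraph L) (u v y z : L) (hy : y ∈ sideOf T u v)
    (h : T.Adj y z) (hne : s(y, z) ≠ s(u, v)) : z ∈ sideOf T u v := by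
  have : (T.deleteEdges {s(u, v)}).Adj z y := by
    rw [deleteEdges_adj]
    refine ⟨h.symm, ?_⟩
    rw [Set.mem_singleton_iff, Sym2.eq_swap]
    exact hne
  exact this.reachable.trans hy

lemma sideOf_cover {L : Type*} (T : SimpleGraph L) (hT : T.IsTree) (u v x : L) :
    x ∈ sideOf T u v ∨ x ∈ sideOf T v u := by
  refine reach_closed T (fun x => x ∈ sideOf T u v ∨ x ∈ sideOf T v u) v x
    (Or.inl (self_sideOf T u v)) ?_ (hT.1.preconnected x v)
  intro y z hy h
  by_cases he : s(y, z) = s(u, v)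
  · rcases Sym2.eq_iff.1 he with ⟨-, rfl⟩ | ⟨-, rfl⟩
    · exact Or.inl (self_sideOf T _ _)
    · exact Or.inr (self_sideOf T _ _)
  · rcases hy with hy | hy
    · exact Or.inl (step_sideOf T u v y z hy h he)
    · exact Or.inr (step_sideOf T v u y z hy h (by rwa [Sym2.eq_swap (a := v)]))

lemma sideOf_split {L : Type*} (T : SimpleGraph L) (u v x : L) (hx : x ∈ sideOf T u v) :
    x = v ∨ ∃ a, T.Adj v a ∧ a ≠ u ∧ x ∈ sideOf T v a := by
  refine reach_closed _ (fun x => x = v ∨ ∃ a, T.Adj v a ∧ a ≠ u ∧ x ∈ sideOf T v a) v x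
    (Or.inl rfl) ?_ hx
  intro y z hy h
  rw [deleteEdges_adj, Set.mem_singleton_iff] at h
  obtain ⟨h, hne⟩ := h
  rcases hy with rfl | ⟨a, ha, hau, hy⟩
  · refine Or.inr ⟨z, h, ?_, self_sideOf T _ _⟩
    rintro rfl
    exact hne Sym2.eq_swap
  · by_cases he : s(y, z) = s(v, a)
    · rcases Sym2.eq_iff.1 he with ⟨-, rfl⟩ | ⟨-, rfl⟩
      · exact Or.inr ⟨z, ha, hau, self_sideOf T _ _⟩
      · exact Or.inl rfl
    · exact Or.inr ⟨a, ha, hau, step_sideOf T v a y z hy h he⟩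

lemma not_mem_sideOf {L : Type*} (T : SimpleGraph L) (hT : T.IsTree) (v a : L)
    (h : T.Adj v a) : v ∉ sideOf T v a := by
  have := (isAcyclic_iff_forall_adj_isBridge.1 hT.2) h
  rw [isBridge_iff] at this
  exact this

lemma sideOf_ssubset {L : Type*} (T : SimpleGraph L) (hT : T.IsTree) (u v a : L)
    (ha : T.Adj v a) (hau : a ≠ u) : sideOf T v a ⊂ sideOf T u v := by
  have hv := not_mem_sideOf T hT v a ha
  refine (Set.ssubset_iff_of_subset ?_).2 ⟨v, self_sideOf T _ _, hv⟩
  intro x hx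
  refine (reach_closed _ (fun x => x ∈ sideOf T v a ∧ x ∈ sideOf T u v) a x
    ⟨self_sideOf T _ _, ?_⟩ ?_ hx).2
  · refine step_sideOf T u v v a (self_sideOf T _ _) ha ?_
    intro he
    rcases Sym2.eq_iff.1 he with ⟨-, h⟩ | ⟨-, h⟩
    · exact ha.ne h.symm
    · exact hau h
  · rintro y z ⟨hy, hy'⟩ h
    rw [deleteEdges_adj, Set.mem_singleton_iff] at h
    have hz := step_sideOf T v a y z hy h.1 h.2
    refine ⟨hz, step_sideOf T u v y z hy' h.1 ?_⟩
    intro he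
    rcases Sym2.eq_iff.1 he with ⟨-, rfl⟩ | ⟨rfl, -⟩
    · exact hv hz
    · exact hv hy

/-- Lemma `separationtree`: if `T` is a tree in which every node has degree 1
or 3 and `α > 2` of its leaves are labeled, then `T` has an edge such that both connected
components obtained by deleting it contain at least `α/3` labeled leaves. -/
theorem stmt11 {L : Type*} [Fintype L] (T : SimpleGraph L) (hT : T.IsTree)
    (hdeg : ∀ t : L, (T.neighborSet t).ncard = 1 ∨ (T.neighborSet t).ncard = 3)
    (labeled : Set L) (hleaf : ∀ t ∈ labeled, (T.neighborSet t).ncard = 1)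
    (α : ℕ) (hα : 2 < α) (hcard : labeled.ncard = α) :
    ∃ t₁ t₂ : L, T.Adj t₁ t₂ ∧
      α ≤ 3 * {v ∈ labeled | (T.deleteEdges {s(t₁, t₂)}).Reachable v t₁}.ncard ∧
      α ≤ 3 * {v ∈ labeled | (T.deleteEdges {s(t₁, t₂)}).Reachable v t₂}.ncard := by
  have hcov : ∀ u v, α ≤ (labeled ∩ sideOf T u v).ncard + (labeled ∩ sideOf T v u).ncard := by
    intro u v
    rw [← hcard]
    refine le_trans (Set.ncard_le_ncard ?_ (Set.toFinite _)) (Set.ncard_union_le _ _)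
    intro x hx
    rcases sideOf_cover T hT u v x with h | h
    · exact Or.inl ⟨hx, h⟩
    · exact Or.inr ⟨hx, h⟩
  -- good directed edges
  let good : Set (L × L) := {p | T.Adj p.1 p.2 ∧ α ≤ 3 * (labeled ∩ sideOf T p.1 p.2).ncard}
  have hne : good.Nonempty := by
    obtain ⟨t⟩ := hT.1.nonempty
    have : (T.neighborSet t).Nonempty := by
      apply Set.nonempty_of_ncard_ne_zero
      rcases hdeg t with h | h <;> omega
    obtain ⟨s, hs⟩ := this
    have hs : T.Adj t s := hs
    have := hcov t s
    by_cases h : α ≤ 3 * (labeled ∩ sideOf T t s).ncard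
    · exact ⟨(t, s), hs, h⟩
    · refine ⟨(s, t), hs.symm, ?_⟩
      dsimp only
      omega
  obtain ⟨⟨u, v⟩, ⟨huv, hc⟩, hmin⟩ :=
    Set.exists_min_image good (fun p => (sideOf T p.1 p.2).ncard) (Set.toFinite _) hne
  dsimp only at huv hc hmin
  suffices h : α ≤ 3 * (labeled ∩ sideOf T v u).ncard by
    refine ⟨u, v, huv, ?_, hc⟩
    have h2 := h
    unfold sideOf at h2
    rw [Sym2.eq_swap] at h2
    exact h2
  by_contra hlt
  have hbig := hcov u v
  have hvu : u ∈ T.neighborSet v := huv.symm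
  rcases hdeg v with h1 | h3
  · obtain ⟨w, hw⟩ := Set.ncard_eq_one.1 h1
    have hsub : labeled ∩ sideOf T u v ⊆ {v} := by
      rintro x ⟨-, hx⟩
      rcases sideOf_split T u v x hx with h | ⟨a, ha, hau, -⟩
      · exact h
      · have ha : a ∈ T.neighborSet v := ha
        rw [hw] at ha hvu
        exact absurd (ha.trans hvu.symm) hau
    have := Set.ncard_le_ncard hsub (Set.toFinite _)
    rw [Set.ncard_singleton] at this
    omega
  · have hab : ∃ a b, T.Adj v a ∧ a ≠ u ∧ T.Adj v b ∧ b ≠ u ∧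
        ∀ w, T.Adj v w → w ≠ u → w = a ∨ w = b := by
      obtain ⟨x, y, z, hxy, hxz, hyz, hw⟩ := Set.ncard_eq_three.1 h3
      have key : ∀ w, T.Adj v w ↔ w = x ∨ w = y ∨ w = z := by
        intro w
        rw [← mem_neighborSet, hw]
        simp
      have hu := (key u).1 huv.symm
      rcases hu with rfl | rfl | rfl
      · exact ⟨y, z, by grind⟩
      · exact ⟨x, z, by grind⟩
      · exact ⟨x, y, by grind⟩
    obtain ⟨a, b, hva, hau, hvb, hbu, hall⟩ := hab
    have hsub : labeled ∩ sideOf T u v ⊆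
        (labeled ∩ sideOf T v a) ∪ (labeled ∩ sideOf T v b) := by
      rintro x ⟨hl, hx⟩
      rcases sideOf_split T u v x hx with rfl | ⟨c, hc, hcu, hxc⟩
      · have := hleaf x hl
        omega
      · rcases hall c hc hcu with rfl | rfl
        · exact Or.inl ⟨hl, hxc⟩
        · exact Or.inr ⟨hl, hxc⟩
    have hle := (Set.ncard_le_ncard hsub (Set.toFinite _)).trans (Set.ncard_union_le _ _)
    have hno : ∀ c, T.Adj v c → c ≠ u → 3 * (labeled ∩ sideOf T v c).ncard < α := by
      intro c hvc hcu
      by_contra hge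
      have h1 := hmin (v, c) ⟨hvc, not_lt.1 hge⟩
      have h2 := Set.ncard_lt_ncard (sideOf_ssubset T hT u v c hvc hcu) (Set.toFinite _)
      dsimp only at h1
      omega
    have := hno a hva hau
    have := hno b hvb hbu
    omega
end

section
/- There exists a function f : ℕ³ → ℕ such that for all integers d, ℓ, p and every graph G of distance VC-dimension at most d, at least one of the following holds: (a) G contains a d-localized set of size p which is d-sparse; (b) the B_ℓ-hypergraph of G satisfies the (f(ν_ℓ, d, p), d+1)-property. -/
open SimpleGraph

/-- A set `X` of centers is `q`-sparse (for radius `ℓ`): no vertex of `G` belongs to more than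
`q` balls of radius `ℓ` centered at vertices of `X`. -/
def QSparse {V : Type*} (G : SimpleGraph V) (ℓ : ℕ) (X : Finset V) (q : ℕ) : Prop :=
  ∀ v : V, {x : V | x ∈ X ∧ v ∈ gball G x ℓ}.ncard ≤ q

/-- A set `X` is `d`-localized (for radius `ℓ`): its vertices are pairwise at distance at
least `ℓ+1` and at most `2ℓ - 2^{d+2} - 3`. -/
def DLocalizedSet {V : Type*} (G : SimpleGraph V) (ℓ d : ℕ) (X : Finset V) : Prop :=
  ∀ x ∈ X, ∀ y ∈ X, x ≠ y →
    ((ℓ : ℕ∞) + 1 ≤ G.edist x y ∧ G.edist x y + 2 ^ (d + 2) + 3 ≤ 2 * ℓ)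


/-- A multicolour Ramsey lemma. -/
lemma aux_ramsey_s12 (q : ℕ) (hq : 0 < q) (s : ℕ) : ∃ N : ℕ, ∀ (n : Fin q → ℕ), ∑ i, n i = s →
    ∀ (V : Type) (col : V → V → Fin q), (∀ x y, col x y = col y x) →
    ∀ X : Finset V, N ≤ X.card →
    ∃ i : Fin q, ∃ T ⊆ X, T.card = n i ∧ ∀ x ∈ T, ∀ y ∈ T, x ≠ y → col x y = i := by
  classical
  induction s with
  | zero =>
    refine ⟨0, fun n hn V col _ X _ => ⟨⟨0, hq⟩, ∅, by simp, ?_, by simp⟩⟩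
    have := (Finset.sum_eq_zero_iff.mp hn) ⟨0, hq⟩ (Finset.mem_univ _)
    simp [this]
  | succ s ih =>
    obtain ⟨N, hN⟩ := ih
    refine ⟨q * N + 1, fun n hn V col hsymm X hX => ?_⟩
    obtain ⟨x, hx⟩ : X.Nonempty := Finset.card_pos.mp (by omega)
    have hcard : q * N ≤ (X.erase x).card := by
      rw [Finset.card_erase_of_mem hx]; omega
    obtain ⟨i, -, hi⟩ := Finset.exists_le_card_fiber_of_mul_le_card_of_maps_to
      (s := X.erase x) (t := (Finset.univ : Finset (Fin q))) (f := fun y => col x y) (n := N)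
      (fun _ _ => Finset.mem_univ _) ⟨⟨0, hq⟩, Finset.mem_univ _⟩ (by simpa using hcard)
    by_cases h0 : n i = 0
    · exact ⟨i, ∅, by simp, by simp [h0], by simp⟩
    · have hsum : ∑ j, (Function.update n i (n i - 1)) j = s := by
        have h1 := Finset.sum_update_of_mem (Finset.mem_univ i) n (n i - 1)
        have h2 := Finset.add_sum_erase Finset.univ n (Finset.mem_univ i)
        rw [← Finset.erase_eq] at h1
        omega
      obtain ⟨j, T, hT, hTc, hTm⟩ := hN _ hsum V col hsymm _ hi
      have hTX : ∀ y ∈ T, y ∈ X ∧ y ≠ x ∧ col x y = i := by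
        intro y hy
        have := hT hy
        simp only [Finset.mem_filter, Finset.mem_erase] at this
        tauto
      by_cases hji : j = i
      · subst hji
        refine ⟨j, insert x T, ?_, ?_, ?_⟩
        · intro y hy
          rcases Finset.mem_insert.mp hy with rfl | hy
          · exact hx
          · exact (hTX y hy).1
        · rw [Finset.card_insert_of_notMem (fun h => (hTX x h).2.1 rfl), hTc]
          simp; omega
        · intro y hy z hz hyz
          rcases Finset.mem_insert.mp hy with hy1 | hy1 <;>
          rcases Finset.mem_insert.mp hz with hz1 | hz1
          · exact absurd (hy1.trans hz1.symm) hyz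
          · rw [hy1]; exact (hTX z hz1).2.2
          · rw [hz1, hsymm]; exact (hTX y hy1).2.2
          · exact hTm y hy1 z hz1 hyz
      · exact ⟨j, T, fun y hy => (hTX y hy).1, by simpa [hji] using hTc, hTm⟩

open Classical in
/-- Digraphs of bounded outdegree have large independent sets. -/
lemma aux_indep {V : Type} (R : V → V → Prop) (d n : ℕ) : ∀ (X : Finset V),
    (∀ x ∈ X, (X.filter (fun y => R x y)).card ≤ d) → (2 * d + 1) * n ≤ X.card →
    ∃ T ⊆ X, T.card = n ∧ ∀ x ∈ T, ∀ y ∈ T, x ≠ y → ¬ R x y := by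
  induction n with
  | zero => intro X _ _; exact ⟨∅, by simp, by simp, by simp⟩
  | succ n ih =>
    intro X hX hc
    have hpos : 0 < X.card := by
      have : (2 * d + 1) * (n + 1) = (2 * d + 1) * n + (2 * d + 1) := by ring
      omega
    obtain ⟨x, hx, hin⟩ : ∃ x ∈ X, (X.filter (fun y => R y x)).card ≤ d := by
      by_contra! hcon
      have h1 : ∑ x ∈ X, (X.filter (fun y => R x y)).card
          = ∑ x ∈ X, (X.filter (fun y => R y x)).card :=
        Finset.sum_card_bipartiteAbove_eq_sum_card_bipartiteBelow (s := X) (t := X) R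
      have h2 : ∑ x ∈ X, (X.filter (fun y => R x y)).card ≤ X.card * d := by
        simpa using Finset.sum_le_card_nsmul X _ d hX
      have h3 : X.card * (d + 1) ≤ ∑ x ∈ X, (X.filter (fun y => R y x)).card := by
        simpa using Finset.card_nsmul_le_sum X _ (d + 1) (fun x hx => hcon x hx)
      nlinarith
    set X' := X \ (insert x (X.filter (fun y => R x y) ∪ X.filter (fun y => R y x))) with hX'
    have hsub : X' ⊆ X := Finset.sdiff_subset
    have hc' : (2 * d + 1) * n ≤ X'.card := by
      have h1 := Finset.le_card_sdiff
        (insert x (X.filter (fun y => R x y) ∪ X.filter (fun y => R y x))) X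
      have h2 := Finset.card_insert_le x (X.filter (fun y => R x y) ∪ X.filter (fun y => R y x))
      have h3 := Finset.card_union_le (X.filter (fun y => R x y)) (X.filter (fun y => R y x))
      have h4 := hX x hx
      have : (2 * d + 1) * (n + 1) = (2 * d + 1) * n + (2 * d + 1) := by ring
      rw [hX']
      omega
    obtain ⟨T, hT, hTc, hTi⟩ := ih X' (fun y hy => le_trans
      (Finset.card_le_card (Finset.filter_subset_filter _ hsub)) (hX y (hsub hy))) hc'
    have hTx : ∀ y ∈ T, y ∈ X ∧ y ≠ x ∧ ¬ R x y ∧ ¬ R y x := by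
      intro y hy
      have := hT hy
      simp only [hX', Finset.mem_sdiff, Finset.mem_insert, Finset.mem_union,
        Finset.mem_filter] at this
      tauto
    refine ⟨insert x T, ?_, ?_, ?_⟩
    · intro y hy
      rcases Finset.mem_insert.mp hy with rfl | hy
      · exact hx
      · exact (hTx y hy).1
    · rw [Finset.card_insert_of_notMem (fun h => (hTx x h).2.1 rfl), hTc]
    · intro y hy z hz hyz
      rcases Finset.mem_insert.mp hy with hy1 | hy1 <;>
      rcases Finset.mem_insert.mp hz with hz1 | hz1
      · exact absurd (hy1.trans hz1.symm) hyz
      · rw [hy1]; exact (hTx z hz1).2.2.1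
      · rw [hz1]; exact (hTx y hy1).2.2.2
      · exact hTi y hy1 z hz1 hyz

/-- Selection of two disjoint sets `A`, `Y` that are free with respect to `near (m y a)`. -/
lemma aux_select (d K : ℕ) : ∃ M : ℕ, ∀ (V : Type) (X : Finset V) (near : V → V → Finset V),
    M ≤ X.card → (∀ y a, (near y a).card ≤ d) →
    ∃ A Y : Finset V, A ⊆ X ∧ Y ⊆ X ∧ Disjoint A Y ∧ A.card = d + 1 ∧ Y.card = K ∧
      ∀ y ∈ Y, ∀ a ∈ A, (∀ y' ∈ Y, y' ∈ near y a → y' = y) ∧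
        (∀ a' ∈ A, a' ∈ near y a → a' = a) := by
  classical
  set b := (2 * d + 1) * (d + 1) with hb
  set c := (2 * ((d + 1) * d) + 1) * K with hcdef
  refine ⟨b + 2 ^ b * c, fun V X near hX hnear => ?_⟩
  obtain ⟨B, hBX, hB⟩ := Finset.exists_subset_card_eq (show b ≤ X.card by omega)
  have hA : ∀ y, ∃ A ⊆ B, A.card = d + 1 ∧ ∀ a ∈ A, ∀ a' ∈ A, a ≠ a' → ¬ a' ∈ near y a := by
    intro y
    refine aux_indep (fun a a' => a' ∈ near y a) d (d + 1) B ?_ (by omega)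
    intro a _
    refine le_trans (Finset.card_le_card (t := near y a) ?_) (hnear y a)
    intro z hz
    simp only [Finset.mem_filter] at hz
    exact hz.2
  choose Af hAB hAc hAi using hA
  have hcs : 2 ^ b * c ≤ (X \ B).card := by
    rw [Finset.card_sdiff_of_subset hBX]; omega
  obtain ⟨A, hAmem, hAcard⟩ := Finset.exists_le_card_fiber_of_mul_le_card_of_maps_to
      (s := X \ B) (t := B.powerset) (f := Af) (n := c)
      (fun y _ => Finset.mem_powerset.mpr (hAB y)) ⟨∅, by simp⟩
      (by rw [Finset.card_powerset, hB]; exact hcs)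
  have hAB' := Finset.mem_powerset.mp hAmem
  set Y0 := (X \ B).filter (fun y => Af y = A) with hY0
  by_cases hY0e : Y0.Nonempty
  swap
  · -- then `c = 0`, hence `K = 0`
    rw [Finset.not_nonempty_iff_eq_empty] at hY0e
    have hc0 : c = 0 := by simpa [hY0e] using hAcard
    have hK : K = 0 := by
      rw [hcdef] at hc0
      rcases Nat.mul_eq_zero.mp hc0 with h | h <;> omega
    obtain ⟨A', hA', hA'c⟩ := Finset.exists_subset_card_eq
      (show d + 1 ≤ B.card by rw [hB, hb]; nlinarith)
    exact ⟨A', ∅, hA'.trans hBX, by simp, by simp, hA'c, by simp [hK], by simp⟩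
  have hY0m : ∀ y ∈ Y0, y ∈ X ∧ y ∉ B ∧ Af y = A := by
    intro y hy
    simp only [hY0, Finset.mem_filter, Finset.mem_sdiff] at hy
    tauto
  have hAcd : A.card = d + 1 := by
    obtain ⟨y, hy⟩ := hY0e
    rw [← (hY0m y hy).2.2]; exact hAc y
  obtain ⟨Y, hYY, hYc, hYi⟩ := aux_indep (fun y y' => ∃ a ∈ A, y' ∈ near y a) ((d + 1) * d) K Y0
    (by
      intro y _
      refine le_trans (Finset.card_le_card (t := A.biUnion (fun a => near y a)) ?_) ?_
      · intro z hz
        simp only [Finset.mem_filter] at hz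
        simpa using hz.2
      · rw [← hAcd]
        exact Finset.card_biUnion_le_card_mul _ _ _ (fun a _ => hnear y a)) hAcard
  refine ⟨A, Y, hAB'.trans hBX, fun y hy => (hY0m y (hYY hy)).1, ?_, hAcd, hYc, ?_⟩
  · rw [Finset.disjoint_left]
    intro a ha hay
    exact (hY0m a (hYY hay)).2.1 (hAB' ha)
  · intro y hy a ha
    refine ⟨fun y' hy' hn => ?_, fun a' ha' hn => ?_⟩
    · by_contra hne
      exact hYi y hy y' hy' (Ne.symm hne) ⟨a, ha, hn⟩
    · by_contra hne
      have h := (hY0m y (hYY hy)).2.2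
      exact hAi y a (h ▸ ha) a' (h ▸ ha') (Ne.symm hne) hn

lemma aux_edist_take {V : Type} {G : SimpleGraph V} {u v : V} (w : G.Walk u v) (j : ℕ) :
    G.edist u (w.getVert j) ≤ (j : ℕ∞) := by
  refine le_trans (SimpleGraph.edist_le (w.take j)) ?_
  have : (w.take j).length ≤ j := by simp [SimpleGraph.Walk.take_length]
  exact_mod_cast this

lemma aux_edist_drop {V : Type} {G : SimpleGraph V} {u v : V} (w : G.Walk u v) (j : ℕ) :
    G.edist (w.getVert j) v ≤ ((w.length - j : ℕ) : ℕ∞) := by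
  refine le_trans (SimpleGraph.edist_le (w.drop j)) ?_
  have : (w.drop j).length ≤ w.length - j := by simp [SimpleGraph.Walk.drop_length]
  exact_mod_cast this

/-- If `edist` is at least `r` and there is a two-step bound, get a bound on naturals. -/
lemma aux_tri {V : Type} {G : SimpleGraph V} {u v w : V} {r i j : ℕ}
    (h : G.edist u w = r) (h1 : G.edist u v ≤ (i : ℕ∞)) (h2 : G.edist v w ≤ (j : ℕ∞)) :
    r ≤ i + j := by
  have h3 : G.edist u w ≤ G.edist u v + G.edist v w := G.edist_triangle
  have : (r : ℕ∞) ≤ (i : ℕ∞) + (j : ℕ∞) := by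
    rw [← h]; exact h3.trans (add_le_add h1 h2)
  exact_mod_cast this

/-- Main graph lemma: no large sparse set with equal pairwise distances `r ∈ [ℓ+1, 2ℓ]`. -/
lemma aux_core (d : ℕ) : ∃ M : ℕ, ∀ (ℓ r : ℕ) (V : Type) (_ : Fintype V) (G : SimpleGraph V)
    (X : Finset V), distVCdimLE G d → ℓ + 1 ≤ r → r ≤ 2 * ℓ → M ≤ X.card →
    (∀ x ∈ X, ∀ y ∈ X, x ≠ y → G.edist x y = (r : ℕ∞)) →
    (∀ v : V, {c : V | c ∈ X ∧ v ∈ gball G c ℓ}.ncard ≤ d) → False := by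
  classical
  obtain ⟨M, hM⟩ := aux_select d (2 ^ (d + 1))
  refine ⟨M, fun ℓ r V _ G X hvc hr1 hr2 hMX hdist hsparse => ?_⟩
  have hP : ∀ y a : V, ∃ P : G.Walk y a ⊕ Unit, G.edist y a = (r : ℕ∞) →
      ∃ w : G.Walk y a, P = Sum.inl w ∧ w.length = r := by
    intro y a
    by_cases h : G.edist y a = (r : ℕ∞)
    · obtain ⟨w, hw⟩ := SimpleGraph.exists_walk_of_edist_eq_coe h
      exact ⟨Sum.inl w, fun _ => ⟨w, rfl, hw⟩⟩
    · exact ⟨Sum.inr (), fun h' => absurd h' h⟩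
  choose P hPw using hP
  -- position functions
  let pos : V → V → ℕ → V := fun y a j =>
    match P y a with
    | Sum.inl w => w.getVert j
    | Sum.inr _ => y
  have hpos : ∀ y a, G.edist y a = (r : ℕ∞) → ∃ w : G.Walk y a, w.length = r ∧
      ∀ j, pos y a j = w.getVert j := by
    intro y a h
    obtain ⟨w, hw, hl⟩ := hPw y a h
    exact ⟨w, hl, fun j => by simp only [pos, hw]⟩
  set k := r / 2 with hk
  let near : V → V → Finset V := fun y a =>
    X.filter (fun x => pos y a k ∈ gball G x ℓ)
  obtain ⟨A, Y, hAX, hYX, hAY, hAc, hYc, hfree⟩ := hM V X near hMX (by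
    intro y a
    have := hsparse (pos y a k)
    rw [← Set.ncard_coe_finset]
    convert this using 2
    ext x; simp [near])
  have hAYne : ∀ a ∈ A, ∀ y ∈ Y, y ≠ a := by
    intro a ha y hy h
    exact (Finset.disjoint_left.mp hAY) ha (h ▸ hy)
  have hYA : ∀ a ∈ A, ∀ y ∈ Y, G.edist y a = (r : ℕ∞) := fun a ha y hy =>
    hdist y (hYX hy) a (hAX ha) (hAYne a ha y hy)
  -- labelling of subsets
  have hcardeq : A.powerset.card = Y.card := by rw [Finset.card_powerset, hAc, hYc]
  let e : A.powerset ≃ Y := Finset.equivOfCardEq hcardeq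
  let yf : A.powerset → V := fun A' => (e A' : V)
  have hyfY : ∀ A', yf A' ∈ Y := fun A' => (e A').2
  have hyfinj : ∀ A' A'', yf A' = yf A'' → A' = A'' := fun A' A'' h =>
    e.injective (Subtype.ext h)
  let S : Set V := {v | v ∈ X ∨ ∃ A' : A.powerset, ∃ a ∈ (A' : Finset V), ∃ j ≤ r,
    v = pos (yf A') a j}
  have hXS : ∀ x ∈ X, x ∈ S := fun x hx => Or.inl hx
  have key : ∀ (A' : A.powerset) (a : V) (ha : a ∈ A),
      (G.induce S).edist ⟨yf A', hXS _ (hYX (hyfY A'))⟩ ⟨a, hXS _ (hAX ha)⟩ ≤ (r : ℕ∞) ↔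
        a ∈ (A' : Finset V) := by
    intro A' a ha
    constructor
    · intro hle
      have hd := hYA a ha _ (hyfY A')
      obtain ⟨w, hw⟩ := SimpleGraph.exists_walk_of_edist_ne_top
        (ne_top_of_le_ne_top (ENat.natCast_ne_top r) hle)
      rw [← hw] at hle
      have hwl : w.length ≤ r := by exact_mod_cast hle
      let f : G.induce S →g G := (SimpleGraph.Embedding.induce S).toHom
      have h1 : G.edist (yf A') ((w.getVert k : S) : V) ≤ (k : ℕ∞) := by
        have := aux_edist_take (w.map f) k
        rw [SimpleGraph.Walk.getVert_map] at this
        exact this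
      have h2 : G.edist ((w.getVert k : S) : V) a ≤ ((r - k : ℕ) : ℕ∞) := by
        have := aux_edist_drop (w.map f) k
        rw [SimpleGraph.Walk.getVert_map, SimpleGraph.Walk.length_map] at this
        refine le_trans this ?_
        exact_mod_cast (by omega : w.length - k ≤ r - k)
      generalize w.getVert k = vS at h1 h2
      obtain ⟨v, hvS⟩ := vS
      change G.edist (yf A') v ≤ (k : ℕ∞) at h1
      change G.edist v a ≤ ((r - k : ℕ) : ℕ∞) at h2
      rcases hvS with hvX | ⟨A'', a', ha', j, hj, hvj⟩
      · exfalso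
        by_cases hvy : v = yf A'
        · have := aux_tri (i := 0) hd (v := v) (by rw [hvy]; simp) h2
          omega
        · have := hdist _ (hYX (hyfY A')) v hvX (Ne.symm hvy)
          rw [this] at h1
          have : r ≤ k := by exact_mod_cast h1
          omega
      · have ha'A : a' ∈ A := Finset.mem_powerset.mp A''.2 ha'
        obtain ⟨w', hw'l, hw'⟩ := hpos _ _ (hYA a' ha'A _ (hyfY A''))
        have h3 : G.edist (yf A'') v ≤ (j : ℕ∞) := by
          rw [hvj, hw']; exact aux_edist_take w' j
        have h4 : G.edist v a' ≤ ((r - j : ℕ) : ℕ∞) := by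
          rw [hvj, hw', ← hw'l]; exact aux_edist_drop w' j
        have h5 := aux_tri (hYA a ha _ (hyfY A'')) h3 h2
        have h6 := aux_tri (hYA a' ha'A _ (hyfY A')) h1 h4
        have hjk : j = k := by omega
        subst hjk
        have hf := hfree _ (hyfY A'') a' ha'A
        have hy : yf A' = yf A'' := by
          apply hf.1 _ (hyfY A')
          simp only [near, Finset.mem_filter]
          refine ⟨hYX (hyfY A'), ?_⟩
          rw [← hvj]
          exact le_trans h1 (by exact_mod_cast (by omega : k ≤ ℓ))
        have hae : a = a' := by
          apply hf.2 _ ha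
          simp only [near, Finset.mem_filter]
          refine ⟨hAX ha, ?_⟩
          rw [← hvj]
          change G.edist a v ≤ _
          rw [SimpleGraph.edist_comm]
          exact le_trans h2 (by exact_mod_cast (by omega : r - k ≤ ℓ))
        rw [hyfinj _ _ hy, hae]
        exact ha'
    · intro haA'
      obtain ⟨w, hwl, hw⟩ := hpos _ _ (hYA a ha _ (hyfY A'))
      have hsupp : ∀ x ∈ w.support, x ∈ S := by
        intro x hx
        obtain ⟨j, hj, hjl⟩ := SimpleGraph.Walk.mem_support_iff_exists_getVert.mp hx
        exact Or.inr ⟨A', a, haA', j, by omega, by rw [hw, hj]⟩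
      refine le_trans (SimpleGraph.edist_le (w.induce S hsupp)) ?_
      have : (w.induce S hsupp).length = w.length := by
        have h1 := SimpleGraph.Walk.length_support (w.induce S hsupp)
        have h2 := SimpleGraph.Walk.length_support w
        rw [SimpleGraph.Walk.support_induce, List.length_attachWith] at h1
        omega
      rw [this, hwl]
  have hsh := hvc S {s : S | (s : V) ∈ A} (by
    intro Z hZ
    let A' : A.powerset := ⟨A.filter (fun a => ∃ h : a ∈ S, (⟨a, h⟩ : S) ∈ Z),
      Finset.mem_powerset.mpr (Finset.filter_subset _ _)⟩
    refine ⟨⟨yf A', hXS _ (hYX (hyfY A'))⟩, r, ?_⟩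
    ext ⟨s, hs⟩
    constructor
    · rintro ⟨h1, h2⟩
      have h2' : s ∈ A := h2
      have h3 := (key A' s h2').mp h1
      obtain ⟨_, _, h4⟩ := Finset.mem_filter.mp h3
      exact h4
    · intro h
      have h2 : s ∈ A := hZ h
      refine ⟨(key A' s h2).mpr ?_, h2⟩
      exact Finset.mem_filter.mpr ⟨h2, hs, h⟩)
  have hn : ({s : S | (s : V) ∈ A} : Set S).ncard = A.card := by
    rw [← Set.ncard_image_of_injective _ Subtype.val_injective, ← Set.ncard_coe_finset]
    congr 1
    ext v
    constructor
    · rintro ⟨⟨x, h⟩, hx, rfl⟩; exact hx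
    · intro h; exact ⟨⟨v, hXS _ (hAX h)⟩, h, rfl⟩
  omega

/-- Lemma `chemincourtlong`: there is a function `f` such that for every graph
`G` of distance VC-dimension at most `d`, either `G` contains a `d`-sparse `d`-localized set of
size `p`, or the `B_ℓ`-hypergraph of `G` has the `(f(ν_ℓ, d, p), d+1)`-property. -/
theorem stmt12 :
    ∃ f : ℕ → ℕ → ℕ → ℕ,
      ∀ (d ℓ p : ℕ) (V : Type) (_ : Fintype V) (G : SimpleGraph V),
        distVCdimLE G d →
          (∃ X : Finset V, X.card = p ∧ DLocalizedSet G ℓ d X ∧ QSparse G ℓ X d) ∨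
          (∀ C : Finset V, C.card = f (packingNumber G ℓ) d p →
            ∃ v : V, d + 1 ≤ {c : V | c ∈ C ∧ v ∈ gball G c ℓ}.ncard) := by
  classical
  choose M hM using aux_core
  choose N hN using aux_ramsey_s12
  refine ⟨fun ν d p => N (2 ^ (d + 2) + 6) (Nat.succ_pos _)
    ((2 ^ (d + 2) + 6) * (d + 1 + (ν + 1) + p + M d)), fun d ℓ p V _ G hvc => ?_⟩
  by_contra hcon
  rw [not_or] at hcon
  obtain ⟨hnoloc, hb⟩ := hcon
  push Not at hb
  obtain ⟨C, hC, hsp⟩ := hb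
  have hsp' : ∀ T ⊆ C, ∀ v : V, {c : V | c ∈ T ∧ v ∈ gball G c ℓ}.ncard ≤ d := by
    intro T hT v
    refine le_trans (Set.ncard_le_ncard ?_ (Set.toFinite _)) (Nat.le_of_lt_succ (hsp v))
    rintro c ⟨h1, h2⟩
    exact ⟨hT h1, h2⟩
  set L := d + 1 + (packingNumber G ℓ + 1) + p + M d with hL
  have hpow : 0 < 2 ^ (d + 2) := by positivity
  let cn : V → V → ℕ := fun x y =>
    if G.edist x y ≤ (ℓ : ℕ∞) then 0
    else if ((2 * ℓ : ℕ) : ℕ∞) < G.edist x y then 1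
    else if G.edist x y + 2 ^ (d + 2) + 3 ≤ 2 * (ℓ : ℕ∞) then 2
    else 3 + (2 * ℓ - (G.edist x y).toNat)
  have hcases : ∀ x y, cn x y < 2 ^ (d + 2) + 6 ∧
      ((cn x y = 0 ∧ G.edist x y ≤ (ℓ : ℕ∞)) ∨
       (cn x y = 1 ∧ ((2 * ℓ : ℕ) : ℕ∞) < G.edist x y) ∨
       (cn x y = 2 ∧ (ℓ : ℕ∞) + 1 ≤ G.edist x y ∧
          G.edist x y + 2 ^ (d + 2) + 3 ≤ 2 * (ℓ : ℕ∞)) ∨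
       (∃ t : ℕ, cn x y = 3 + (2 * ℓ - t) ∧ G.edist x y = (t : ℕ∞) ∧ ℓ + 1 ≤ t ∧ t ≤ 2 * ℓ)) := by
    intro x y
    simp only [cn]
    split_ifs with h1 h2 h3
    · exact ⟨by omega, Or.inl ⟨rfl, h1⟩⟩
    · exact ⟨by omega, Or.inr (Or.inl ⟨rfl, h2⟩)⟩
    · exact ⟨by omega, Or.inr (Or.inr (Or.inl ⟨rfl, Order.add_one_le_of_lt (not_le.mp h1), h3⟩))⟩
    · generalize G.edist x y = D at h1 h2 h3 ⊢
      have hD : D ≠ ⊤ := by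
        rintro rfl
        exact h2 (ENat.natCast_lt_top _)
      lift D to ℕ using hD
      have h1' : ¬ D ≤ ℓ := by exact_mod_cast h1
      have h2' : ¬ 2 * ℓ < D := by exact_mod_cast h2
      have h3' : ¬ D + 2 ^ (d + 2) + 3 ≤ 2 * ℓ := by exact_mod_cast h3
      simp only [ENat.toNat_natCast]
      exact ⟨by omega, Or.inr (Or.inr (Or.inr ⟨D, rfl, rfl, by omega, by omega⟩))⟩
  let col : V → V → Fin (2 ^ (d + 2) + 6) := fun x y => ⟨cn x y, (hcases x y).1⟩
  have hsymm : ∀ x y, col x y = col y x := by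
    intro x y
    apply Fin.ext
    simp only [col, cn, SimpleGraph.edist_comm (u := x) (v := y)]
  obtain ⟨i, T, hTC, hTc, hTm⟩ := hN (2 ^ (d + 2) + 6) (by omega) _ (fun _ => L)
    (by simp [hL]) V col hsymm C (le_of_eq hC.symm)
  have hTm' : ∀ x ∈ T, ∀ y ∈ T, x ≠ y → cn x y = (i : ℕ) := fun x hx y hy h =>
    congrArg Fin.val (hTm x hx y hy h)
  have hcol : (i : ℕ) = 0 ∨ (i : ℕ) = 1 ∨ (i : ℕ) = 2 ∨ 3 ≤ (i : ℕ) := by omega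
  rcases hcol with hi | hi | hi | hi
  · -- all close
    obtain ⟨v, hv⟩ : T.Nonempty := Finset.card_pos.mp (by omega)
    have h1 := hsp' T hTC v
    have h2 : {c : V | c ∈ T ∧ v ∈ gball G c ℓ} = (T : Set V) := by
      ext c
      simp only [Set.mem_ofPred_eq, Finset.mem_coe, and_iff_left_iff_imp]
      intro hc
      change G.edist c v ≤ _
      by_cases hcv : c = v
      · rw [hcv]; simp
      · have h3 := hTm' c hc v hv hcv
        rcases (hcases c v).2 with h | h | h | ⟨t, h, -⟩
        · exact h.2
        all_goals omega
    rw [h2, Set.ncard_coe_finset] at h1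
    omega
  · -- packing
    have hbdd : BddAbove {n | ∃ C : Finset V, C.card = n ∧
        (C : Set V).Pairwise fun u w => Disjoint (gball G u ℓ) (gball G w ℓ)} := by
      refine ⟨Fintype.card V, ?_⟩
      rintro n ⟨C, rfl, -⟩
      exact Finset.card_le_univ C
    have : T.card ≤ packingNumber G ℓ := by
      refine le_csSup hbdd ⟨T, rfl, ?_⟩
      intro x hx y hy hxy
      rw [Set.disjoint_left]
      intro z hz1 hz2
      have h3 := hTm' x hx y hy hxy
      rcases (hcases x y).2 with h | h | h | ⟨t, h, -⟩
      · omega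
      · have hz1' : G.edist x z ≤ (ℓ : ℕ∞) := hz1
        have hz2' : G.edist z y ≤ (ℓ : ℕ∞) := by
          rw [SimpleGraph.edist_comm]; exact hz2
        have h4 : G.edist x y ≤ G.edist x z + G.edist z y := G.edist_triangle
        have h5 := h4.trans (add_le_add hz1' hz2')
        have h6 := lt_of_lt_of_le h.2 h5
        have h7 : 2 * ℓ < ℓ + ℓ := by exact_mod_cast h6
        omega
      all_goals omega
    omega
  · -- localized
    obtain ⟨T', hT', hT'c⟩ := Finset.exists_subset_card_eq (show p ≤ T.card by omega)
    refine hnoloc ⟨T', hT'c, ?_, hsp' T' (hT'.trans hTC)⟩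
    intro x hx y hy hxy
    have h3 := hTm' x (hT' hx) y (hT' hy) hxy
    rcases (hcases x y).2 with h | h | h | ⟨t, h, -⟩
    · omega
    · omega
    · exact h.2
    · omega
  · -- equal distances
    obtain ⟨x, hx, y, hy, hxy⟩ := Finset.one_lt_card.mp (show 1 < T.card by omega)
    have h3 := hTm' x hx y hy hxy
    obtain ⟨r, hr, -, hr1, hr2⟩ : ∃ t : ℕ, cn x y = 3 + (2 * ℓ - t) ∧ G.edist x y = (t : ℕ∞) ∧
        ℓ + 1 ≤ t ∧ t ≤ 2 * ℓ := by
      rcases (hcases x y).2 with h | h | h | h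
      · omega
      · omega
      · omega
      · exact h
    refine hM d ℓ r V inferInstance G T hvc hr1 hr2 (by omega) ?_ (hsp' T hTC)
    intro u hu v hv huv
    have h4 := hTm' u hu v hv huv
    rcases (hcases u v).2 with h | h | h | ⟨t, h, ht, ht1, ht2⟩
    · omega
    · omega
    · omega
    · have : t = r := by omega
      rw [ht, this]
end

section
/- For every integer ℓ ≥ 0, every planar graph of diameter at most 2ℓ has a dominating set at distance ℓ of size at most 35200; equivalently, it can be covered by at most 35200 balls of radius ℓ. -/
open SimpleGraph

/-- `G` has an `H`-minor: there is a family of pairwise disjoint, nonempty, connected branch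
sets in `G` indexed by the vertices of `H`, with an edge of `G` between the branch sets of any
two adjacent vertices of `H`. -/
def HasMinor {V W : Type*} (G : SimpleGraph V) (H : SimpleGraph W) : Prop :=
  ∃ X : W → Set V,
    (∀ i, (G.induce (X i)).Connected) ∧
    (Pairwise fun i j => Disjoint (X i) (X j)) ∧
    ∀ i j, H.Adj i j → ∃ u ∈ X i, ∃ v ∈ X j, G.Adj u v

/-- `G` is planar.  By Wagner's theorem, a graph is planar iff it has neither a `K₅` minor nor
a `K₃,₃` minor; we use this characterization as the definition. -/
def IsPlanar {V : Type*} (G : SimpleGraph V) : Prop :=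
  ¬ HasMinor G (completeGraph (Fin 5)) ∧
  ¬ HasMinor G (completeBipartiteGraph (Fin 3) (Fin 3))

/-- Voronoi cell of the `i`-th centre, ties broken by index. -/
def voronoiCell {V : Type*} (G : SimpleGraph V) (x : Fin 5 → V) (i : Fin 5) : Set V :=
  {u | ∀ j, G.dist u (x i) < G.dist u (x j) ∨ (G.dist u (x i) = G.dist u (x j) ∧ i ≤ j)}

lemma exists_adj_dist_pred {V : Type*} {G : SimpleGraph V} (hG : G.Connected) {u x : V} {n : ℕ}
    (h : G.dist u x = n + 1) : ∃ w, G.Adj u w ∧ G.dist w x = n := by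
  obtain ⟨p, hp⟩ := hG.exists_walk_length_eq_dist u x
  cases p with
  | nil => simp at h
  | cons hadj q =>
    rename_i w
    refine ⟨w, hadj, ?_⟩
    have h1 := dist_le q
    have h2 := hG.dist_triangle (u := u) (v := w) (w := x)
    have h3 : G.dist u w = 1 := dist_eq_one_iff_adj.2 hadj
    simp at hp
    omega

lemma dist_adj_le {V : Type*} {G : SimpleGraph V} (hG : G.Connected) {u w : V} (h : G.Adj u w)
    (x : V) : G.dist u x ≤ G.dist w x + 1 := by
  have h2 := hG.dist_triangle (u := u) (v := w) (w := x)
  have h3 : G.dist u w = 1 := dist_eq_one_iff_adj.2 h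
  omega

lemma voronoi_center {V : Type*} {G : SimpleGraph V} (hG : G.Connected) {x : Fin 5 → V}
    (hx : Function.Injective x) (i : Fin 5) : x i ∈ voronoiCell G x i := by
  intro j
  by_cases hij : i = j
  · subst hij; right; simp
  · left
    have : x i ≠ x j := fun h => hij (hx h)
    simpa using hG.pos_dist_of_ne this

lemma voronoi_connected {V : Type*} {G : SimpleGraph V} (hG : G.Connected) {x : Fin 5 → V}
    (hx : Function.Injective x) (i : Fin 5) : (G.induce (voronoiCell G x i)).Connected := by
  have key : ∀ n, ∀ u, ∀ hu : u ∈ voronoiCell G x i, G.dist u (x i) = n →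
      (G.induce (voronoiCell G x i)).Reachable ⟨u, hu⟩ ⟨x i, voronoi_center hG hx i⟩ := by
    intro n
    induction n with
    | zero =>
      intro u hu h
      have : u = x i := by simpa [hG.dist_eq_zero_iff] using h
      subst this
      exact Reachable.refl _
    | succ n ih =>
      intro u hu h
      obtain ⟨w, hw, hd⟩ := exists_adj_dist_pred hG h
      have hwc : w ∈ voronoiCell G x i := by
        intro j
        have h1 := hu j
        have h2 := dist_adj_le hG hw (x j)
        rcases h1 with h1 | ⟨h1, h3⟩
        · left; omega
        · rcases Nat.lt_or_ge (G.dist w (x i)) (G.dist w (x j)) with h4 | h4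
          · exact Or.inl h4
          · right; exact ⟨by omega, h3⟩
      refine Reachable.trans (Adj.reachable ?_) (ih w hwc hd)
      simpa using hw
  have : Nonempty (voronoiCell G x i) := ⟨⟨x i, voronoi_center hG hx i⟩⟩
  refine ⟨fun a b => ?_⟩
  exact (key _ a.1 a.2 rfl).trans (key _ b.1 b.2 rfl).symm

lemma voronoi_edge {V : Type*} {G : SimpleGraph V} (hG : G.Connected) {x : Fin 5 → V}
    (hx : Function.Injective x) {i j : Fin 5} (hij : i ≠ j) : ∀ n, ∀ u ∈ voronoiCell G x i,
    G.dist u (x j) = n → (∀ k, k ≠ i → k ≠ j → n < G.dist u (x k)) →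
    ∃ a ∈ voronoiCell G x i, ∃ b ∈ voronoiCell G x j, G.Adj a b := by
  intro n
  induction n with
  | zero =>
    intro u hu h _
    have h0 : u = x j := by simpa [hG.dist_eq_zero_iff] using h
    exfalso
    have h1 := hu j
    have : G.dist u (x i) = 0 := by omega
    have h2 : u = x i := by simpa [hG.dist_eq_zero_iff] using this
    exact hij (hx (h2.symm.trans h0))
  | succ n ih =>
    intro u hu h hk
    obtain ⟨w, hw, hd⟩ := exists_adj_dist_pred hG h
    have hk' : ∀ k, k ≠ i → k ≠ j → n < G.dist w (x k) := by
      intro k h1 h2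
      have := hk k h1 h2
      have := dist_adj_le hG hw (x k)
      omega
    by_cases hc : G.dist w (x i) < G.dist w (x j) ∨ (G.dist w (x i) = G.dist w (x j) ∧ i ≤ j)
    · refine ih w ?_ hd hk'
      intro k
      by_cases h1 : k = i
      · subst h1; right; simp
      by_cases h2 : k = j
      · subst h2; exact hc
      have := hk' k h1 h2
      left; omega
    · refine ⟨u, hu, w, ?_, hw⟩
      intro k
      by_cases h2 : k = j
      · subst h2; right; simp
      by_cases h1 : k = i
      · subst h1; omega
      have := hk' k h1 h2
      left; omega

lemma k5_minor {V : Type*} {G : SimpleGraph V} (hG : G.Connected) (ℓ : ℕ) (x : Fin 5 → V)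
    (h : ∀ a b, a < b → ∃ v, G.dist (x a) v ≤ ℓ ∧ G.dist (x b) v ≤ ℓ ∧
      ∀ c, c ≠ a → c ≠ b → ℓ < G.dist (x c) v) : HasMinor G (completeGraph (Fin 5)) := by
  have h' : ∀ a b, a ≠ b → ∃ v, G.dist v (x a) ≤ ℓ ∧ G.dist v (x b) ≤ ℓ ∧
      ∀ c, c ≠ a → c ≠ b → ℓ < G.dist v (x c) := by
    intro a b hab
    simp only [G.dist_comm (u := x _)] at h
    rcases lt_or_gt_of_ne hab with h1 | h1
    · exact h a b h1
    · obtain ⟨v, h2, h3, h4⟩ := h b a h1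
      exact ⟨v, h3, h2, fun c hc hc' => h4 c hc' hc⟩
  have hx : Function.Injective x := by
    intro a b hab
    by_contra hne
    obtain ⟨c, hca, hcb⟩ : ∃ c : Fin 5, c ≠ a ∧ c ≠ b := by
      clear hab; revert a b; decide
    obtain ⟨v, h1, h2, h3⟩ := h' a c hca.symm
    have := h3 b (Ne.symm hne) hcb.symm
    rw [← hab] at this
    omega
  refine ⟨voronoiCell G x, voronoi_connected hG hx, ?_, ?_⟩
  · intro i j hij
    rw [Set.disjoint_left]
    intro u hi hj
    have h1 := hi j
    have h2 := hj i
    apply hij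
    apply le_antisymm <;> omega
  · intro i j hij
    have hij : i ≠ j := by simpa using hij
    obtain ⟨v, h1, h2, h3⟩ := h' i j hij
    by_cases hc : G.dist v (x i) < G.dist v (x j) ∨ (G.dist v (x i) = G.dist v (x j) ∧ i ≤ j)
    · refine voronoi_edge hG hx hij _ v ?_ rfl (fun k hk hk' => by have := h3 k hk hk'; omega)
      intro k
      by_cases h5 : k = i
      · subst h5; right; simp
      by_cases h6 : k = j
      · subst h6; exact hc
      have := h3 k h5 h6
      left; omega
    · obtain ⟨a, ha, b, hb, hab⟩ := voronoi_edge hG hx hij.symm _ v (by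
        intro k
        by_cases h6 : k = j
        · subst h6; right; simp
        by_cases h5 : k = i
        · subst h5; omega
        have := h3 k h5 h6
        left; omega) rfl (fun k hk hk' => by have := h3 k hk' hk; omega)
      exact ⟨b, hb, a, ha, hab.symm⟩

lemma exists_mid {V : Type*} {G : SimpleGraph V} (hG : G.Connected) (ℓ : ℕ) : ∀ (u v : V),
    G.dist u v ≤ 2 * ℓ → ∃ w, G.dist u w ≤ ℓ ∧ G.dist v w ≤ ℓ := by
  have key : ∀ (m : ℕ) (u v : V), G.dist u v ≤ ℓ + m → ∃ w, G.dist u w ≤ m ∧ G.dist w v ≤ ℓ := by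
    intro m
    induction m with
    | zero => intro u v h; exact ⟨u, by simp, by simpa using h⟩
    | succ m ih =>
      intro u v h
      by_cases h0 : G.dist u v ≤ ℓ
      · exact ⟨u, by simp, h0⟩
      obtain ⟨n, hn⟩ : ∃ n, G.dist u v = n + 1 := ⟨G.dist u v - 1, by omega⟩
      obtain ⟨w, hw, hd⟩ := exists_adj_dist_pred hG hn
      obtain ⟨z, h1, h2⟩ := ih w v (by omega)
      exact ⟨z, (dist_adj_le hG hw z).trans (by omega), h2⟩
  intro u v h
  obtain ⟨w, h1, h2⟩ := key ℓ u v (by omega)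
  exact ⟨w, h1, by rwa [G.dist_comm]⟩

open scoped Classical in
lemma minimax_alt {V : Type*} [Fintype V] [Nonempty V] (R : V → V → Prop) (t : ℝ) :
    (∃ p : V → ℝ, (∀ y, 0 ≤ p y) ∧ ∑ y, p y = 1 ∧ ∀ x, t ≤ ∑ y, p y * (if R x y then 1 else 0)) ∨
    (∃ q : V → ℝ, (∀ x, 0 ≤ q x) ∧ ∑ x, q x = 1 ∧
      ∀ y, ∑ x, q x * (if R x y then 1 else 0) ≤ t) := by
  by_contra! hcon
  obtain ⟨h1, h2⟩ := hcon
  let M : (V → ℝ) → (V → ℝ) := fun p x => ∑ y, p y * (if R x y then 1 else 0)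
  have hM : IsLinearMap ℝ M := by
    constructor
    · intro a b; ext x; simp [M, add_mul, Finset.sum_add_distrib, -mul_ite]
    · intro c a; ext x; simp [M, mul_assoc, Finset.mul_sum, -mul_ite]
  have hMc : Continuous M := by
    apply continuous_pi; intro x
    exact continuous_finsetSum _ fun y _ => (continuous_apply y).mul continuous_const
  let T : Set (V → ℝ) := {z | ∀ x, t ≤ z x}
  have hTconv : Convex ℝ T := by
    have : T = Set.Ici (fun _ => t) := by ext z; simp [T, Pi.le_def]
    rw [this]; exact convex_Ici _
  have hTcl : IsClosed T := by
    have : T = Set.Ici (fun _ => t) := by ext z; simp [T, Pi.le_def]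
    rw [this]; exact isClosed_Ici
  have hdisj : Disjoint (M '' stdSimplex ℝ V) T := by
    rw [Set.disjoint_left]
    rintro _ ⟨p, hp, rfl⟩ hT
    obtain ⟨x, hx⟩ := h1 p hp.1 hp.2
    exact absurd (hT x) (not_le.2 hx)
  obtain ⟨f, u, v, hf1, huv, hf2⟩ := geometric_hahn_banach_compact_closed
    ((convex_stdSimplex ℝ V).is_linear_image hM) ((isCompact_stdSimplex ℝ V).image hMc)
    hTconv hTcl hdisj
  let c : V → ℝ := fun x => f (Pi.single x 1)
  have hf : ∀ z : V → ℝ, f z = ∑ x, z x * c x := by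
    intro z
    conv_lhs => rw [pi_eq_sum_univ' z]
    simp only [map_sum, map_smul, smul_eq_mul, c]
  have hc : ∀ x, 0 ≤ c x := by
    intro x
    by_contra! hx
    have hN : ∀ N : ℝ, 0 ≤ N → v < f (fun _ => t) + N * c x := by
      intro N hN
      have := hf2 ((fun _ => t) + N • Pi.single x 1) (by
        intro y
        have : 0 ≤ (Pi.single x (1:ℝ) : V → ℝ) y := by
          rw [Pi.single_apply]; split_ifs <;> norm_num
        simp only [Pi.add_apply, Pi.smul_apply, smul_eq_mul]
        nlinarith [mul_nonneg hN this])
      simpa [c] using this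
    have h0 := hN 0 le_rfl
    have h3 := hN ((f (fun _ => t) - v) / (-c x)) (div_nonneg (by linarith) (by linarith))
    have : (f (fun _ => t) - v) / (-c x) * c x = -(f (fun _ => t) - v) := by
      have hne : c x ≠ 0 := hx.ne
      rw [div_neg, neg_mul, div_mul_cancel₀ _ hne]
    rw [this] at h3
    linarith
  have hv : v < t * ∑ x, c x := by
    have := hf2 (fun _ => t) (fun x => le_rfl)
    rw [hf, ← Finset.mul_sum] at this
    exact this
  have hy : ∀ y, ∑ x, c x * (if R x y then 1 else 0) < t * ∑ x, c x := by
    intro y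
    have h3 := hf1 (M (Pi.single y 1)) ⟨_, single_mem_stdSimplex ℝ y, rfl⟩
    rw [hf] at h3
    have h4 : ∑ x, M (Pi.single y 1) x * c x = ∑ x, c x * (if R x y then 1 else 0) := by
      refine Finset.sum_congr rfl fun x _ => ?_
      have h5 : M (Pi.single y 1) x = if R x y then 1 else 0 := by
        simp only [M, Pi.single_apply, ite_mul, one_mul, zero_mul, Finset.sum_ite_eq',
          Finset.mem_univ, if_true]
      rw [h5, mul_comm]
    rw [h4] at h3
    linarith
  have hC : 0 < ∑ x, c x := by
    rcases (Finset.sum_nonneg fun x _ => hc x : 0 ≤ ∑ x, c x).lt_or_eq with h | h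
    · exact h
    · exfalso
      obtain ⟨y⟩ := ‹Nonempty V›
      have := hy y
      rw [← h, mul_zero] at this
      exact absurd this (not_lt.2 (Finset.sum_nonneg fun x _ =>
        mul_nonneg (hc x) (by split_ifs <;> norm_num)))
  obtain ⟨y, hlt⟩ := h2 (fun x => c x / ∑ x, c x) (fun x => div_nonneg (hc x) hC.le)
    (by rw [← Finset.sum_div, div_self hC.ne'])
  have h5 := hy y
  have h6 : ∑ x, c x / (∑ x, c x) * (if R x y then (1:ℝ) else 0)
      = (∑ x, c x * (if R x y then 1 else 0)) / ∑ x, c x := by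
    rw [Finset.sum_div]
    refine Finset.sum_congr rfl fun x _ => ?_
    ring
  rw [h6, lt_div_iff₀ hC] at hlt
  linarith

lemma sum_prod_eq_one {V ι : Type*} [Fintype V] [Fintype ι] [DecidableEq ι] {p : V → ℝ}
    (h1 : ∑ y, p y = 1) : ∑ s : ι → V, ∏ i, p (s i) = 1 := by
  have := Finset.prod_univ_sum (fun _ : ι => (Finset.univ : Finset V)) (fun _ y => p y)
  rw [Fintype.piFinset_univ] at this
  rw [← this]; simp [h1]

open scoped Classical in
lemma exists_config {V : Type*} [Fintype V] (R : V → V → Prop) (f : V → V → V)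
    (q : V → ℝ) (hq0 : ∀ x, 0 ≤ q x) (hq1 : ∑ x, q x = 1)
    (hq : ∀ y, ∑ x, q x * (if R x y then 1 else 0) ≤ 1 / 32) :
    ∃ x : Fin 5 → V, ∀ a b, a < b → ∀ c, c ≠ a → c ≠ b → ¬ R (x c) (f (x a) (x b)) := by
  by_contra! hcon
  let P : Finset (Fin 5 × Fin 4 × Fin 4) := Finset.univ.filter fun z => z.2.1 < z.2.2
  let bad : Fin 5 × Fin 4 × Fin 4 → (Fin 5 → V) → Prop := fun z x =>
    R (x z.1) (f (x (z.1.succAbove z.2.1)) (x (z.1.succAbove z.2.2)))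
  have hP : P.card = 30 := by rfl
  have hbad : ∀ x, ∃ z ∈ P, bad z x := by
    intro x
    obtain ⟨a, b, hab, c, hca, hcb, hR⟩ := hcon x
    obtain ⟨a', rfl⟩ := Fin.exists_succAbove_eq hca.symm
    obtain ⟨b', rfl⟩ := Fin.exists_succAbove_eq hcb.symm
    refine ⟨(c, a', b'), ?_, hR⟩
    simpa [P] using hab
  have hz : ∀ z ∈ P, ∑ x : Fin 5 → V, (∏ i, q (x i)) * (if bad z x then 1 else 0) ≤ 1 / 32 := by
    rintro ⟨c, a, b⟩ _
    rw [← (Fin.insertNthEquiv (fun _ => V) c).sum_comp, Fintype.sum_prod_type_right]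
    calc _ = ∑ x' : Fin 4 → V, (∏ i, q (x' i)) *
          ∑ v, q v * (if R v (f (x' a) (x' b)) then 1 else 0) := by
          refine Finset.sum_congr rfl fun x' _ => ?_
          rw [Finset.mul_sum]
          refine Finset.sum_congr rfl fun v _ => ?_
          simp only [Fin.insertNthEquiv, Equiv.coe_fn_mk, Fin.prod_univ_succAbove _ c,
            Fin.insertNth_apply_same, Fin.insertNth_apply_succAbove, bad]
          ring
      _ ≤ ∑ x' : Fin 4 → V, (∏ i, q (x' i)) * (1 / 32) := by
          refine Finset.sum_le_sum fun x' _ => ?_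
          exact mul_le_mul_of_nonneg_left (hq _) (Finset.prod_nonneg fun i _ => hq0 _)
      _ = 1 / 32 := by rw [← Finset.sum_mul, sum_prod_eq_one hq1, one_mul]
  have h1 : (1 : ℝ) ≤ ∑ z ∈ P, ∑ x : Fin 5 → V, (∏ i, q (x i)) * (if bad z x then 1 else 0) := by
    rw [Finset.sum_comm]
    refine (sum_prod_eq_one (ι := Fin 5) hq1).symm.le.trans ?_
    refine Finset.sum_le_sum fun x _ => ?_
    obtain ⟨z, hz, hb⟩ := hbad x
    have h0 : 0 ≤ ∏ i, q (x i) := Finset.prod_nonneg fun i _ => hq0 _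
    refine le_trans ?_ (Finset.single_le_sum (f := fun z => (∏ i, q (x i)) *
      (if bad z x then (1:ℝ) else 0)) (fun w _ => mul_nonneg h0 (by split_ifs <;> norm_num)) hz)
    simp [hb]
  have h2 := Finset.sum_le_card_nsmul P _ _ hz
  rw [hP] at h2
  norm_num at h2
  norm_num at h1
  linarith

open scoped Classical in
lemma trace_card {V κ : Type*} [Fintype V] [Fintype κ] [DecidableEq κ] (R : V → V → Prop) (u : κ → V)
    (hvc : ∀ x : Fin 5 → V, ∃ a b, a < b ∧ ∀ v, R v (x a) → R v (x b) →
      ∃ c, c ≠ a ∧ c ≠ b ∧ R v (x c)) :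
    (Finset.univ.image fun x => Finset.univ.filter fun i => R x (u i)).card ≤
      ∑ k ∈ Finset.Iic 4, (Fintype.card κ).choose k := by
  set 𝒜 : Finset (Finset κ) := Finset.univ.image fun x => Finset.univ.filter fun i => R x (u i)
    with h𝒜
  have hvc4 : 𝒜.vcDim ≤ 4 := by
    refine Finset.sup_le fun S hS => ?_
    rw [Finset.mem_shatterer] at hS
    by_contra! hlt
    obtain ⟨S', hsub, hcard⟩ := Finset.exists_subset_card_eq (Nat.succ_le_of_lt hlt)
    have hS' := hS.mono_right hsub
    let e : Fin 5 ≃ S' := (Finset.equivFinOfCardEq hcard).symm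
    obtain ⟨a, b, hab, h⟩ := hvc fun i => u (e i)
    obtain ⟨U, hU, hint⟩ := hS' (t := {(e a : κ), (e b : κ)}) (by
      intro z hz
      simp only [Finset.mem_insert, Finset.mem_singleton] at hz
      rcases hz with rfl | rfl
      · exact (e a).2
      · exact (e b).2)
    simp only [h𝒜, Finset.mem_image, Finset.mem_univ, true_and] at hU
    obtain ⟨v, rfl⟩ := hU
    have key : ∀ c : Fin 5, R v (u (e c)) ↔ c = a ∨ c = b := by
      intro c
      have := Finset.ext_iff.1 hint (e c)
      simpa [Subtype.ext_iff.symm] using this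
    obtain ⟨c, hca, hcb, hR⟩ := h v ((key a).2 (Or.inl rfl)) ((key b).2 (Or.inr rfl))
    rcases (key c).1 hR with h | h
    · exact hca h
    · exact hcb h
  refine (Finset.card_le_card_shatterer 𝒜).trans (Finset.card_shatterer_le_sum_vcDim.trans ?_)
  exact Finset.sum_le_sum_of_subset (Finset.Iic_subset_Iic.2 hvc4)

/-- Some ball misses the sample `s` and hits each block of the sample `t`. -/
def SplitEvent {V : Type*} {k m : ℕ} (R : V → V → Prop)
    (st : (Fin k × Fin m → V) × (Fin k × Fin m → V)) : Prop :=
  ∃ x, (∀ i, ¬ R x (st.1 i)) ∧ ∀ b, ∃ j, R x (st.2 (b, j))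

/-- Swap the blocks of two samples according to the bits `σ`. -/
def blockSwap {V : Type*} {k m : ℕ} (σ : Fin k → Bool) :
    (Fin k × Fin m → V) × (Fin k × Fin m → V) ≃ (Fin k × Fin m → V) × (Fin k × Fin m → V) :=
  Function.Involutive.toPerm
    (fun st => (fun i => if σ i.1 then st.2 i else st.1 i,
      fun i => if σ i.1 then st.1 i else st.2 i)) (by
    rintro ⟨s, t⟩
    ext i
    · by_cases h : σ i.1 <;> simp [h]
    · by_cases h : σ i.1 <;> simp [h])

open scoped Classical in
lemma swap_count {V : Type*} {k m : ℕ} [Fintype V] [Nonempty V] (R : V → V → Prop)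
    (hvc : ∀ x : Fin 5 → V, ∃ a b, a < b ∧ ∀ v, R v (x a) → R v (x b) →
      ∃ c, c ≠ a ∧ c ≠ b ∧ R v (x c))
    (st : (Fin k × Fin m → V) × (Fin k × Fin m → V)) :
    (Finset.univ.filter fun σ : Fin k → Bool => SplitEvent R (blockSwap σ st)).card ≤
      ∑ i ∈ Finset.Iic 4, (2 * (k * m)).choose i := by
  have hc : Fintype.card ((Fin k × Fin m) ⊕ (Fin k × Fin m)) = 2 * (k * m) := by
    simp; ring
  rw [← hc]
  refine le_trans ?_ (trace_card R (Sum.elim st.1 st.2) hvc)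
  have hne : ∀ σ : Fin k → Bool, SplitEvent R (blockSwap σ st) →
      ∃ x, (∀ i : Fin k × Fin m, ¬ R x (if σ i.1 then st.2 i else st.1 i)) ∧
      ∀ b, ∃ j, R x (if σ b then st.1 (b, j) else st.2 (b, j)) := fun σ h => h
  choose! X hX1 hX2 using hne
  refine Finset.card_le_card_of_injOn
    (fun σ => Finset.univ.filter fun i => R (X σ) (Sum.elim st.1 st.2 i)) ?_ ?_
  · intro σ _
    exact Finset.mem_coe.2 (Finset.mem_image_of_mem _ (Finset.mem_univ _))
  · have main : ∀ σ σ' : Fin k → Bool, SplitEvent R (blockSwap σ st) →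
        SplitEvent R (blockSwap σ' st) →
        (∀ i, R (X σ) (Sum.elim st.1 st.2 i) ↔ R (X σ') (Sum.elim st.1 st.2 i)) →
        ∀ b, σ b = true → σ' b = true := by
      intro σ σ' h h' heq b hb
      by_contra hb'
      obtain ⟨j, hj⟩ := hX2 σ' h' b
      have h1 := hX1 σ h (b, j)
      have h2 := heq (Sum.inr (b, j))
      simp only [hb, if_true] at h1
      simp only [hb'] at hj
      simp only [Sum.elim_inr] at h2
      exact h1 (h2.2 (by simpa using hj))
    intro σ hσ σ' hσ' heq
    have hσ : SplitEvent R (blockSwap σ st) := by simpa using hσ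
    have hσ' : SplitEvent R (blockSwap σ' st) := by simpa using hσ'
    have heq' : ∀ i, R (X σ) (Sum.elim st.1 st.2 i) ↔ R (X σ') (Sum.elim st.1 st.2 i) := by
      intro i
      have := Finset.ext_iff.1 heq i
      simpa only [Finset.mem_filter, Finset.mem_univ, true_and] using this
    funext b
    rw [Bool.eq_iff_iff]
    exact ⟨main σ σ' hσ hσ' heq' b, main σ' σ hσ' hσ (fun i => (heq' i).symm) b⟩

open scoped Classical in
lemma miss_block {V : Type*} {k m : ℕ} [Fintype V] (S : V → Prop) (p : V → ℝ)
    (h0 : ∀ x, 0 ≤ p x) (h1 : ∑ x, p x = 1) (ε : ℝ) (hε : ε ≤ ∑ y, p y * (if S y then 1 else 0))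
    (b : Fin k) :
    ∑ t : Fin k × Fin m → V, (∏ i, p (t i)) * (if ∀ j, ¬ S (t (b, j)) then 1 else 0)
      ≤ (1 - ε) ^ m := by
  have hle : ∑ y, p y * (if S y then 0 else 1) ≤ 1 - ε := by
    have : ∑ y, p y * (if S y then (0:ℝ) else 1) + ∑ y, p y * (if S y then 1 else 0) = 1 := by
      rw [← Finset.sum_add_distrib]
      refine Eq.trans ?_ h1
      refine Finset.sum_congr rfl fun y _ => ?_
      split_ifs <;> simp
    linarith
  have hpos : 0 ≤ ∑ y, p y * (if S y then (0:ℝ) else 1) :=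
    Finset.sum_nonneg fun y _ => mul_nonneg (h0 y) (by split_ifs <;> norm_num)
  have e := Finset.prod_univ_sum (fun _ : Fin k × Fin m => (Finset.univ : Finset V))
    (fun i y => p y * (if i.1 = b then (if S y then (0:ℝ) else 1) else 1))
  rw [Fintype.piFinset_univ] at e
  have e2 : ∀ t : Fin k × Fin m → V, (∏ i, p (t i)) * (if ∀ j, ¬ S (t (b, j)) then (1:ℝ) else 0)
      = ∏ i, p (t i) * (if i.1 = b then (if S (t i) then (0:ℝ) else 1) else 1) := by
    intro t
    rw [Finset.prod_mul_distrib]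
    congr 1
    rw [Fintype.prod_prod_type, Finset.prod_eq_single b]
    · split_ifs with h
      · simp [h]
      · push Not at h
        obtain ⟨j, hj⟩ := h
        symm
        exact Finset.prod_eq_zero (Finset.mem_univ j) (by simp [hj])
    · intro c _ hc
      simp [hc]
    · simp
  rw [Finset.sum_congr rfl fun t _ => e2 t, ← e, Fintype.prod_prod_type,
    Finset.prod_eq_single b]
  · simp only [if_true]
    rw [Finset.prod_const, Finset.card_univ, Fintype.card_fin]
    exact pow_le_pow_left₀ hpos hle m
  · intro c _ hc
    simp [hc, h1]
  · simp

open scoped Classical in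
lemma eps_net {V : Type*} [Fintype V] [Nonempty V] (R : V → V → Prop)
    (hvc : ∀ x : Fin 5 → V, ∃ a b, a < b ∧ ∀ v, R v (x a) → R v (x b) →
      ∃ c, c ≠ a ∧ c ≠ b ∧ R v (x c))
    (p : V → ℝ) (h0 : ∀ x, 0 ≤ p x) (h1 : ∑ x, p x = 1) (ε : ℝ)
    (hε : ∀ x, ε ≤ ∑ y, p y * (if R x y then 1 else 0)) (k m : ℕ)
    (hm : k * (1 - ε) ^ m ≤ 1 / 2)
    (hk : 2 * ∑ i ∈ Finset.Iic 4, (2 * (k * m)).choose i < 2 ^ k) :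
    ∃ X : Finset V, X.card ≤ k * m ∧ ∀ x, ∃ y ∈ X, R x y := by
  by_contra! hcon
  have hmiss : ∀ s : Fin k × Fin m → V, ∃ x, ∀ i, ¬ R x (s i) := by
    intro s
    obtain ⟨x, hx⟩ := hcon (Finset.univ.image s) (Finset.card_image_le.trans (by simp))
    exact ⟨x, fun i => hx _ (Finset.mem_image_of_mem _ (Finset.mem_univ i))⟩
  let F : (Fin k × Fin m → V) → ℝ := fun s => ∏ i, p (s i)
  have hF0 : ∀ s, 0 ≤ F s := fun s => Finset.prod_nonneg fun i _ => h0 _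
  have hF1 : ∑ s, F s = 1 := sum_prod_eq_one h1
  let J : (Fin k × Fin m → V) × (Fin k × Fin m → V) → ℝ := fun st =>
    if SplitEvent R st then 1 else 0
  -- lower bound
  have hlow : 1 / 2 ≤ ∑ st : (Fin k × Fin m → V) × (Fin k × Fin m → V),
      F st.1 * F st.2 * J st := by
    rw [Fintype.sum_prod_type]
    have hs : ∀ s, F s * (1 / 2) ≤ ∑ t, F s * F t * J (s, t) := by
      intro s
      obtain ⟨x, hx⟩ := hmiss s
      simp only [mul_assoc]
      rw [← Finset.mul_sum]
      refine mul_le_mul_of_nonneg_left ?_ (hF0 s)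
      have hU : ∑ t, F t * (∑ b : Fin k, if ∀ j, ¬ R x (t (b, j)) then (1:ℝ) else 0) ≤ 1 / 2 := by
        simp only [Finset.mul_sum]
        rw [Finset.sum_comm]
        refine (Finset.sum_le_card_nsmul _ _ _ fun b _ =>
          miss_block (R x) p h0 h1 ε (hε x) b).trans ?_
        simpa using hm
      have hsum : ∀ t, F t ≤ F t * J (s, t) +
          F t * (∑ b : Fin k, if ∀ j, ¬ R x (t (b, j)) then (1:ℝ) else 0) := by
        intro t
        rw [← mul_add]
        refine le_mul_of_one_le_right (hF0 t) ?_
        by_cases hall : ∀ b, ∃ j, R x (t (b, j))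
        · have : J (s, t) = 1 := if_pos ⟨x, hx, hall⟩
          rw [this]
          have : 0 ≤ ∑ b : Fin k, if ∀ j, ¬ R x (t (b, j)) then (1:ℝ) else 0 :=
            Finset.sum_nonneg fun b _ => by split_ifs <;> norm_num
          linarith
        · push Not at hall
          obtain ⟨b, hb⟩ := hall
          have hJ : 0 ≤ J (s, t) := by simp only [J]; split_ifs <;> norm_num
          have := Finset.single_le_sum
            (f := fun b : Fin k => if ∀ j, ¬ R x (t (b, j)) then (1:ℝ) else 0)
            (fun b _ => by split_ifs <;> norm_num) (Finset.mem_univ b)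
          rw [if_pos hb] at this
          linarith
      have := Finset.sum_le_sum fun t (_ : t ∈ Finset.univ) => hsum t
      rw [hF1, Finset.sum_add_distrib] at this
      linarith
    calc (1 / 2 : ℝ) = ∑ s, F s * (1 / 2) := by rw [← Finset.sum_mul, hF1, one_mul]
      _ ≤ _ := Finset.sum_le_sum fun s _ => hs s
  -- swapping invariance
  have hinv : ∀ σ : Fin k → Bool, ∑ st : (Fin k × Fin m → V) × (Fin k × Fin m → V),
      F st.1 * F st.2 * J (blockSwap σ st) = ∑ st : (Fin k × Fin m → V) × (Fin k × Fin m → V),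
      F st.1 * F st.2 * J st := by
    intro σ
    rw [← (blockSwap σ).sum_comp (fun st : (Fin k × Fin m → V) × (Fin k × Fin m → V) =>
      F st.1 * F st.2 * J st)]
    refine Finset.sum_congr rfl fun st _ => ?_
    congr 1
    simp only [F, ← Finset.prod_mul_distrib]
    refine Finset.prod_congr rfl fun i _ => ?_
    change _ = p (if σ i.1 then st.2 i else st.1 i) * p (if σ i.1 then st.1 i else st.2 i)
    split_ifs
    · ring
    · rfl
  have hup : (2 : ℝ) ^ k * ∑ st : (Fin k × Fin m → V) × (Fin k × Fin m → V),
      F st.1 * F st.2 * J st ≤ ((∑ i ∈ Finset.Iic 4, (2 * (k * m)).choose i : ℕ) : ℝ) := by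
    have e1 : (2 : ℝ) ^ k * ∑ st : (Fin k × Fin m → V) × (Fin k × Fin m → V),
        F st.1 * F st.2 * J st = ∑ σ : Fin k → Bool,
        ∑ st : (Fin k × Fin m → V) × (Fin k × Fin m → V),
        F st.1 * F st.2 * J (blockSwap σ st) := by
      rw [Finset.sum_congr rfl fun σ _ => hinv σ]
      simp
    rw [e1, Finset.sum_comm]
    have hone : ∑ st : (Fin k × Fin m → V) × (Fin k × Fin m → V), F st.1 * F st.2 = 1 := by
      rw [Fintype.sum_prod_type]
      simp only [← Finset.mul_sum, hF1, mul_one]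
    rw [← one_mul ((∑ i ∈ Finset.Iic 4, (2 * (k * m)).choose i : ℕ) : ℝ), ← hone, Finset.sum_mul]
    refine Finset.sum_le_sum fun st _ => ?_
    rw [← Finset.mul_sum]
    refine mul_le_mul_of_nonneg_left ?_ (mul_nonneg (hF0 _) (hF0 _))
    simp only [J, Finset.sum_boole]
    exact_mod_cast swap_count R hvc st
  have hk' : 2 * ((∑ i ∈ Finset.Iic 4, (2 * (k * m)).choose i : ℕ) : ℝ) < (2 : ℝ) ^ k := by
    exact_mod_cast hk
  have h2 : (0 : ℝ) < 2 ^ k := by positivity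
  nlinarith

lemma numeric1 : ((80 : ℕ) : ℝ) * (1 - 1 / 32) ^ 440 ≤ 1 / 2 := by
  have h : ((1 - 1 / 32 : ℝ)) ^ 44 ≤ 1 / 4 := by norm_num
  have h2 : ((1 - 1 / 32 : ℝ)) ^ 440 ≤ (1 / 4) ^ 10 := by
    rw [show 440 = 44 * 10 from rfl, pow_mul]
    exact pow_le_pow_left₀ (by norm_num) h 10
  exact (mul_le_mul_of_nonneg_left h2 (by positivity)).trans (by norm_num)

lemma numeric2 : 2 * ∑ i ∈ Finset.Iic 4, (2 * (80 * 440)).choose i < 2 ^ 80 := by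
  have : Finset.Iic 4 = ({0, 1, 2, 3, 4} : Finset ℕ) := by decide
  rw [this]
  have h : ∀ n i, Nat.choose n i ≤ n ^ i := fun n i => Nat.choose_le_pow n i
  have := h 70400 2
  have := h 70400 3
  have := h 70400 4
  simp
  norm_num at *
  omega

/-- every planar graph of diameter at most `2ℓ` has a dominating set at
distance `ℓ` of size at most `35200`, i.e. it can be covered by at most `35200` balls of
radius `ℓ`. -/
theorem stmt19 (ℓ : ℕ) {V : Type*} [Fintype V] (G : SimpleGraph V)
    (hplanar : IsPlanar G)
    (hdiam : ∀ u v : V, G.edist u v ≤ (2 * ℓ : ℕ)) :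
    ∃ X : Finset V, X.card ≤ 35200 ∧ ∀ v : V, ∃ x ∈ X, G.edist x v ≤ (ℓ : ℕ) := by
  classical
  rcases isEmpty_or_nonempty V with hV | hV
  · exact ⟨∅, by simp, fun v => hV.elim v⟩
  have hG : G.Connected := ⟨fun u v => reachable_of_edist_ne_top
    (ne_top_of_le_ne_top (ENat.natCast_ne_top _) (hdiam u v))⟩
  have hed : ∀ u v, (G.dist u v : ℕ∞) = G.edist u v := fun u v => (hG u v).coe_dist_eq_edist
  have hd : ∀ u v, G.dist u v ≤ 2 * ℓ := by
    intro u v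
    have := hdiam u v
    rw [← hed] at this
    exact_mod_cast this
  have hno : ∀ x : Fin 5 → V, ¬ ∀ a b, a < b → ∃ v, G.dist (x a) v ≤ ℓ ∧ G.dist (x b) v ≤ ℓ ∧
      ∀ c, c ≠ a → c ≠ b → ℓ < G.dist (x c) v := fun x h => hplanar.1 (k5_minor hG ℓ x h)
  choose f hf1 hf2 using fun u v => exists_mid hG ℓ u v (hd u v)
  let R : V → V → Prop := fun u v => G.dist u v ≤ ℓ
  have hvc : ∀ x : Fin 5 → V, ∃ a b, a < b ∧ ∀ v, R v (x a) → R v (x b) →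
      ∃ c, c ≠ a ∧ c ≠ b ∧ R v (x c) := by
    intro x
    have := hno x
    push Not at this
    obtain ⟨a, b, hab, h⟩ := this
    refine ⟨a, b, hab, fun v h1 h2 => ?_⟩
    simp only [R] at *
    simp only [G.dist_comm (u := v)] at *
    exact h v h1 h2
  rcases minimax_alt R (1 / 32) with ⟨p, hp0, hp1, hp⟩ | ⟨q, hq0, hq1, hq⟩
  · obtain ⟨X, hX, h⟩ := eps_net R hvc p hp0 hp1 (1 / 32) hp 80 440 numeric1 numeric2
    refine ⟨X, hX, fun v => ?_⟩
    obtain ⟨x, hx, hR⟩ := h v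
    refine ⟨x, hx, ?_⟩
    rw [← hed, G.dist_comm]
    exact_mod_cast hR
  · obtain ⟨x, hx⟩ := exists_config R f q hq0 hq1 hq
    exact absurd (fun a b hab => ⟨f (x a) (x b), hf1 _ _, hf2 _ _,
      fun c hca hcb => not_le.1 (hx a b hab c hca hcb)⟩) (hno x)
end
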